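/- arXiv:2410.10191 — 2 statements merged into one kernel-verified Lean document; each statement's English description precedes it below -/
import Mathlib

section
/- For every integer h ≥ 1 and real ε > 0, if G is an edge-weighted K_h-minor-free graph, then the ε-scatter dimension of the shortest-path metric induced by G is at most (6c·(9ε⁻¹+2)^c)^(c+1), where c = C(h−2+2·⌈36h·ε⁻¹⌉, h−1) · (12+72ε⁻¹) · (h−1) and C(·,·) denotes the binomial coefficient. -/
open scoped ENNReal

namespace ScatterDim

variable {V : Type}





/-- Total weight of a walk in an edge-weighted graph. -/
noncomputable def walkWeight {G : SimpleGraph V} (w : Sym2 V → ℝ≥0∞)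
    {u v : V} (p : G.Walk u v) : ℝ≥0∞ :=
  (p.edges.map w).sum

/-- Shortest-path metric of an edge-weighted graph: the infimum of the total
weights of walks between the two vertices. -/
noncomputable def gdist (G : SimpleGraph V) (w : Sym2 V → ℝ≥0∞) (u v : V) : ℝ≥0∞ :=
  ⨅ p : G.Walk u v, walkWeight w p

/-- Shortest-path distance measured within the subgraph induced on `S`
(`⊤` if one of the endpoints is not in `S`). -/
noncomputable def distOn (G : SimpleGraph V) (w : Sym2 V → ℝ≥0∞) (S : Set V)
    (u v : V) : ℝ≥0∞ :=
  ⨅ (hu : u ∈ S), ⨅ (hv : v ∈ S), ⨅ (p : (G.induce S).Walk ⟨u, hu⟩ ⟨v, hv⟩),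
    (p.edges.map (fun e => w (e.map Subtype.val))).sum

/-- Distance between two sets of vertices inside the subgraph induced on `S`. -/
noncomputable def setDistOn (G : SimpleGraph V) (w : Sym2 V → ℝ≥0∞) (S : Set V)
    (A B : Set V) : ℝ≥0∞ :=
  ⨅ a ∈ A, ⨅ b ∈ B, distOn G w S a b

/-- Distance from a point to a set. -/
noncomputable def pdist (G : SimpleGraph V) (w : Sym2 V → ℝ≥0∞) (u : V) (X : Set V) : ℝ≥0∞ :=
  ⨅ x ∈ X, gdist G w u x

/-- `Y` is weakly `r`-reachable from `X` (with respect to the partition `P`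
ordered by `le`): there is a path of total weight at most `r` from a vertex of `X`
to a vertex of `Y` in the subgraph induced on the union of the parts `Z` with `Y ⪯ Z`. -/
def WReach (G : SimpleGraph V) (w : Sym2 V → ℝ≥0∞) (P : Set (Set V))
    (le : Set V → Set V → Prop) (r : ℝ) (X Y : Set V) : Prop :=
  setDistOn G w (⋃₀ {Z | Z ∈ P ∧ le Y Z}) X Y ≤ ENNReal.ofReal r

/-- The weak coloring number of `G` with respect to the partition `P`
and the order `le`: the maximum over `X ∈ P` of the number of parts weakly
`r`-reachable from `X`. -/
noncomputable def wcol (G : SimpleGraph V) (w : Sym2 V → ℝ≥0∞) (P : Set (Set V))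
    (le : Set V → Set V → Prop) (r : ℝ) : ℕ :=
  ⨆ X ∈ P, {Y | Y ∈ P ∧ WReach G w P le r X Y}.ncard

/-- `le` is a total (linear) order on the collection `P`. -/
def IsLinearOrderOn {α : Type} (P : Set α) (le : α → α → Prop) : Prop :=
  (∀ X ∈ P, le X X) ∧
  (∀ X ∈ P, ∀ Y ∈ P, le X Y → le Y X → X = Y) ∧
  (∀ X ∈ P, ∀ Y ∈ P, ∀ Z ∈ P, le X Y → le Y Z → le X Z) ∧
  (∀ X ∈ P, ∀ Y ∈ P, le X Y ∨ le Y X)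

/-- An `ε`-ladder of width `r` and length `ℓ` in the metric `dist`. -/
def IsLadder (dist : V → V → ℝ≥0∞) (ε r : ℝ) (ℓ : ℕ) (x p : Fin ℓ → V) : Prop :=
  (∀ i j : Fin ℓ, j < i → dist (p j) (x i) ≤ ENNReal.ofReal r) ∧
  (∀ i : Fin ℓ, ENNReal.ofReal ((1 + ε) * r) < dist (p i) (x i))

/-- `G` contains the complete graph on `h` vertices as a minor, witnessed by
pairwise disjoint connected nonempty branch sets that are pairwise adjacent. -/
def HasCompleteMinor (G : SimpleGraph V) (h : ℕ) : Prop :=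
  ∃ B : Fin h → Set V,
    (∀ i, (G.induce (B i)).Connected) ∧
    (∀ i j, i ≠ j → Disjoint (B i) (B j)) ∧
    (∀ i j, i ≠ j → ∃ u ∈ B i, ∃ v ∈ B j, G.Adj u v)

/-- `(T, bag)` is a tree decomposition of `G`. -/
def IsTreeDecompOf {ι : Type} (G : SimpleGraph V) (T : SimpleGraph ι) (bag : ι → Set V) : Prop :=
  T.IsTree ∧
  (∀ u v : V, G.Adj u v → ∃ t, u ∈ bag t ∧ v ∈ bag t) ∧
  (∀ v : V, (T.induce {t | v ∈ bag t}).Connected)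

/-- `G` has treewidth at most `n`. -/
def TreewidthAtMost (G : SimpleGraph V) (n : ℕ) : Prop :=
  ∃ (ι : Type) (T : SimpleGraph ι) (bag : ι → Set V),
    IsTreeDecompOf G T bag ∧ ∀ t, (bag t).ncard ≤ n + 1

/-- `D` is an `r`-cover of the edge-weighted graph `(G, w)`. -/
def IsCover (G : SimpleGraph V) (w : Sym2 V → ℝ≥0∞) (r : ℝ) (D : Set (Set V)) : Prop :=
  ∀ v : V, ∃ A ∈ D, ∀ u : V, gdist G w v u ≤ ENNReal.ofReal r → u ∈ A



/-! ### Helper development -/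

section Basics

variable {G : SimpleGraph V}

/-- natural length of a walk -/
def wl (w : Sym2 V → ℕ) {u v : V} (p : G.Walk u v) : ℕ := (p.edges.map w).sum

theorem wl_nil (w : Sym2 V → ℕ) (u : V) : wl w (SimpleGraph.Walk.nil : G.Walk u u) = 0 := by
  simp [wl]

theorem wl_cons (w : Sym2 V → ℕ) {u v z : V} (h : G.Adj u v) (p : G.Walk v z) :
    wl w (SimpleGraph.Walk.cons h p) = w s(u, v) + wl w p := by
  simp [wl]

theorem wl_append (w : Sym2 V → ℕ) {u v z : V} (p : G.Walk u v) (q : G.Walk v z) :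
    wl w (p.append q) = wl w p + wl w q := by
  simp [wl, SimpleGraph.Walk.edges_append]

theorem wl_reverse (w : Sym2 V → ℕ) {u v : V} (p : G.Walk u v) :
    wl w p.reverse = wl w p := by
  simp [wl, SimpleGraph.Walk.edges_reverse]

theorem walk_split (w : Sym2 V → ℕ) {u v z : V} (p : G.Walk u v) (hz : z ∈ p.support) :
    ∃ (p1 : G.Walk u z) (p2 : G.Walk z v), wl w p1 + wl w p2 = wl w p ∧
      (∀ x ∈ p1.support, x ∈ p.support) ∧ (∀ x ∈ p2.support, x ∈ p.support) ∧
      (∀ x ∈ p.support, x ∈ p1.support ∨ x ∈ p2.support) := by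
  classical
  have h := p.take_spec hz
  refine ⟨p.takeUntil z hz, p.dropUntil z hz, ?_, ?_, ?_, ?_⟩
  · rw [← wl_append, h]
  · exact fun x hx => p.support_takeUntil_subset_support hz hx
  · exact fun x hx => p.support_dropUntil_subset_support hz hx
  · intro x hx
    rw [← h, SimpleGraph.Walk.mem_support_append_iff] at hx
    exact hx

/-- reachability within a set, with bounded length -/
def Rch (G : SimpleGraph V) (w : Sym2 V → ℕ) (S : Set V) (d : ℕ) (u v : V) : Prop :=
  ∃ p : G.Walk u v, wl w p ≤ d ∧ ∀ x ∈ p.support, x ∈ S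

variable {w : Sym2 V → ℕ} {S S' : Set V} {d d' : ℕ} {u v z : V}

theorem Rch.refl (hu : u ∈ S) : Rch G w S d u u :=
  ⟨SimpleGraph.Walk.nil, by simp [wl_nil], by simpa using hu⟩

theorem Rch.symm (h : Rch G w S d u v) : Rch G w S d v u := by
  obtain ⟨p, h1, h2⟩ := h
  exact ⟨p.reverse, by rwa [wl_reverse], by simpa using h2⟩

theorem Rch.trans (h : Rch G w S d u v) (h' : Rch G w S d' v z) : Rch G w S (d + d') u z := by
  obtain ⟨p, h1, h2⟩ := h
  obtain ⟨q, h3, h4⟩ := h'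
  refine ⟨p.append q, by rw [wl_append]; omega, ?_⟩
  intro x hx
  rw [SimpleGraph.Walk.mem_support_append_iff] at hx
  exact hx.elim (h2 x) (h4 x)

theorem Rch.mono (h : Rch G w S d u v) (hS : S ⊆ S') (hd : d ≤ d') : Rch G w S' d' u v := by
  obtain ⟨p, h1, h2⟩ := h
  exact ⟨p, h1.trans hd, fun x hx => hS (h2 x hx)⟩

theorem Rch.left (h : Rch G w S d u v) : u ∈ S := by
  obtain ⟨p, h1, h2⟩ := h
  exact h2 _ p.start_mem_support

theorem Rch.right (h : Rch G w S d u v) : v ∈ S := h.symm.left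

/-- walk connectivity -/
def WConn (G : SimpleGraph V) (S : Set V) : Prop :=
  ∀ u ∈ S, ∀ v ∈ S, ∃ p : G.Walk u v, ∀ x ∈ p.support, x ∈ S

/-- component -/
def cmp (G : SimpleGraph V) (S : Set V) (o : V) : Set V :=
  {z | ∃ p : G.Walk o z, ∀ x ∈ p.support, x ∈ S}

theorem cmp_sub {o : V} : cmp G S o ⊆ S := fun z ⟨p, hp⟩ => hp _ p.end_mem_support

theorem cmp_walk {o y z : V} (hy : y ∈ cmp G S o) (p : G.Walk y z) (hp : ∀ x ∈ p.support, x ∈ S) :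
    ∀ x ∈ p.support, x ∈ cmp G S o := by
  intro x hx
  obtain ⟨q, hq⟩ := hy
  obtain ⟨p1, p2, -, h1, -, -⟩ := walk_split (fun _ => 0) p hx
  refine ⟨q.append p1, fun y hy => ?_⟩
  rw [SimpleGraph.Walk.mem_support_append_iff] at hy
  exact hy.elim (hq y) (fun h => hp _ (h1 y h))

theorem cmp_conn {o : V} : WConn G (cmp G S o) := by
  intro u hu v hv
  by_cases ho : o ∈ S
  · have ho' : o ∈ cmp G S o := ⟨SimpleGraph.Walk.nil, by simpa using ho⟩
    obtain ⟨p, hp⟩ := hu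
    obtain ⟨q, hq⟩ := hv
    have h1 := cmp_walk ho' p hp
    have h2 := cmp_walk ho' q hq
    refine ⟨p.reverse.append q, fun x hx => ?_⟩
    rw [SimpleGraph.Walk.mem_support_append_iff] at hx
    exact hx.elim (fun h => h1 x (by simpa using h)) (h2 x)
  · obtain ⟨p, hp⟩ := hu
    exact absurd (hp _ p.start_mem_support) ho

theorem cmp_adj {o y z : V} (hy : y ∈ cmp G S o) (hz : z ∈ S) (h : G.Adj y z) : z ∈ cmp G S o := by
  refine cmp_walk hy (SimpleGraph.Walk.cons h SimpleGraph.Walk.nil) ?_ z (by simp)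
  intro x hx
  simp at hx
  rcases hx with rfl | rfl
  · exact cmp_sub hy
  · exact hz

/-- first entrance to a set -/
theorem first_hit (w : Sym2 V → ℕ) (A : Set V) {x s : V} (p : G.Walk x s) (hx : x ∉ A)
    (hs : s ∈ A) :
    ∃ (y : V) (q : G.Walk x y), wl w q ≤ wl w p ∧ (∀ z ∈ q.support, z ∈ p.support ∧ z ∉ A) ∧
      ∃ a ∈ A, G.Adj y a := by
  induction p with
  | nil => exact absurd hs hx
  | @cons x x1 s h p ih =>
    by_cases h1 : x1 ∈ A
    · exact ⟨x, SimpleGraph.Walk.nil, by simp [wl_nil], by simpa using hx, x1, h1, h⟩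
    · obtain ⟨y, q, hq1, hq2, hq3⟩ := ih h1 hs
      refine ⟨y, SimpleGraph.Walk.cons h q, by rw [wl_cons, wl_cons]; omega, ?_, hq3⟩
      intro z hz
      simp only [SimpleGraph.Walk.support_cons, List.mem_cons] at hz ⊢
      rcases hz with rfl | hz
      · exact ⟨Or.inl rfl, hx⟩
      · exact ⟨Or.inr (hq2 z hz).1, (hq2 z hz).2⟩

theorem WConn.connected (h : WConn G S) (hne : S.Nonempty) : (G.induce S).Connected := by
  obtain ⟨o, ho⟩ := hne
  have : Nonempty S := ⟨⟨o, ho⟩⟩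
  refine SimpleGraph.Connected.mk ?_
  intro a b
  obtain ⟨p, hp⟩ := h a a.2 b b.2
  exact ⟨p.induce S hp⟩

open Classical in
/-- stack lemma -/
theorem stack_lemma (e : ℕ → ℕ) : ∀ (k n b l m : ℕ), l ≤ m →
    (∀ t, l ≤ t → t < m → b ≤ e t ∧ e t < b + n) →
    (∀ m', l ≤ m' → m' ≤ m →
      ((Finset.Ico l m').filter (fun t => ∀ u, t < u → u < m' → e t ≤ e u)).card ≤ k) →
    m - l + 1 ≤ (n + k).choose k := by
  intro k
  induction k with
  | zero =>
    intro n b l m hlm h1 h2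
    rcases Nat.eq_or_lt_of_le hlm with h | h
    · simp [h]
    · exfalso
      have := h2 (l+1) (by omega) (by omega)
      have hm : l ∈ ((Finset.Ico l (l+1)).filter (fun t => ∀ u, t < u → u < l+1 → e t ≤ e u)) := by
        simp only [Finset.mem_filter, Finset.mem_Ico]
        exact ⟨⟨le_rfl, by omega⟩, fun u hu hu' => by omega⟩
      have := Finset.card_pos.mpr ⟨l, hm⟩
      omega
  | succ k ihk =>
    intro n
    induction n with
    | zero =>
      intro b l m hlm h1 h2
      rcases Nat.eq_or_lt_of_le hlm with h | h
      · simp [h]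
      · have := h1 l le_rfl h
        omega
    | succ n ihn =>
      intro b l m hlm h1 h2
      have hp : (n + 1 + (k + 1)).choose (k + 1) = (n + 1 + k).choose k + (n + (k+1)).choose (k + 1) := by
        have : n + 1 + (k + 1) = (n + 1 + k) + 1 := by ring
        rw [this, Nat.choose_succ_succ]
        congr 2
        ring
      rw [hp]
      by_cases hex : ∃ u, l ≤ u ∧ u < m ∧ e u = b
      · let u := Nat.find hex
        obtain ⟨hu1, hu2, hu3⟩ : l ≤ u ∧ u < m ∧ e u = b := Nat.find_spec hex
        have hmin : ∀ t, t < u → ¬ (l ≤ t ∧ t < m ∧ e t = b) := fun t ht => Nat.find_min hex ht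
        have a1 := ihn (b+1) l u hu1 (fun t ht ht' => by
          have := h1 t ht (by omega)
          have := hmin t ht'
          constructor
          · by_contra hc
            exact this ⟨ht, by omega, by omega⟩
          · omega) (fun m' hm hm' => h2 m' hm (by omega))
        have a2 := ihk (n+1) b (u+1) m (by omega) (fun t ht ht' => h1 t (by omega) ht')
          (fun m' hm hm' => by
            have h3 := h2 m' (by omega) hm'
            have hsub : insert u ((Finset.Ico (u+1) m').filter
                (fun t => ∀ u, t < u → u < m' → e t ≤ e u)) ⊆
                ((Finset.Ico l m').filter (fun t => ∀ u, t < u → u < m' → e t ≤ e u)) := by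
              intro t ht
              simp only [Finset.mem_insert, Finset.mem_filter, Finset.mem_Ico] at ht ⊢
              rcases ht with rfl | ht
              · refine ⟨⟨hu1, by omega⟩, fun v hv hv' => ?_⟩
                rw [hu3]
                exact (h1 v (by omega) (by omega)).1
              · exact ⟨⟨by omega, ht.1.2⟩, ht.2⟩
            have h4 := Finset.card_le_card hsub
            rw [Finset.card_insert_of_notMem (by simp)] at h4
            omega)
        omega
      · push Not at hex
        have := ihn (b+1) l m hlm (fun t ht ht' => by
          have h3 := h1 t ht ht'
          have h4 := hex t ht ht'
          omega) h2
        omega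

end Basics

section Game

/-- forbidden zone -/
def Zn (G : SimpleGraph V) (w : Sym2 V → ℕ) (δ : ℕ) (Ω T : ℕ → Set V) (t : ℕ) : Set V :=
  {z | ∃ s ∈ T t, Rch G w (Ω t) δ s z}

/-- the set `A t` got separated from the arena at time at most `m'` -/
def Dropd (G : SimpleGraph V) (w : Sym2 V → ℕ) (β : ℕ) (A : ℕ → Set V) (C : Set V)
    (t m' : ℕ) : Prop :=
  ∃ (K : Set V) (m'' : ℕ), C ⊆ K ∧ m'' ≤ m' ∧
    (∀ v ∈ K, ∀ z, z ∉ K → G.Adj v z → ∃ u < m'', u ≠ t ∧ z ∈ A u) ∧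
    (∀ y ∈ K, ∀ (y' : V) (q : G.Walk y y'), (∀ z ∈ q.support, ∀ u ≤ t, z ∉ A u) →
      (∃ a ∈ A t, G.Adj y' a) → β ≤ wl w q)

theorem Dropd.mono {G : SimpleGraph V} {w : Sym2 V → ℕ} {β : ℕ} {A A' : ℕ → Set V} {C C' : Set V}
    {t m m' : ℕ} (h : Dropd G w β A C t m') (htm : t < m) (hm : m' ≤ m) (hC : C' ⊆ C)
    (hA : ∀ u < m, A u ⊆ A' u) (hAt : A' t = A t) : Dropd G w β A' C' t m' := by
  obtain ⟨K, m'', h1, h2, h3, h4⟩ := h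
  refine ⟨K, m'', hC.trans h1, h2, ?_, ?_⟩
  · intro v hv z hz hvz
    obtain ⟨u, hu, hut, hzu⟩ := h3 v hv z hz hvz
    exact ⟨u, hu, hut, hA u (by omega) hzu⟩
  · intro y hy y' q hq ha
    rw [hAt] at ha
    exact h4 y hy y' q (fun z hz u hu hzA => hq z hz u hu (hA u (by omega) hzA)) ha

/-- ladder data: walks -/
structure Lad (G : SimpleGraph V) (w : Sym2 V → ℕ) (ℓ : ℕ) where
  x : Fin ℓ → V
  p : Fin ℓ → V
  W : ∀ j i : Fin ℓ, j < i → G.Walk (p j) (x i)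

/-- game invariant -/
structure Inv (G : SimpleGraph V) (w : Sym2 V → ℕ) (β δ k R : ℕ) {ℓ : ℕ} (L : Lad G w ℓ)
    (m : ℕ) (Ω A T : ℕ → Set V) (N : Finset ℕ) (C : Set V) (I : Finset (Fin ℓ)) : Prop where
  conn : WConn G C
  nlt : ∀ t ∈ N, t < m
  cΩ : ∀ t < m, C ⊆ Ω t
  cA : ∀ t < m, ∀ v ∈ C, v ∉ A t
  aΩ : ∀ t < m, A t ⊆ Ω t
  tA : ∀ t < m, T t ⊆ A t
  disj : ∀ t < m, ∀ u < m, t ≠ u → Disjoint (A t) (A u)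
  aconn : ∀ t < m, WConn G (A t)
  ane : ∀ t < m, (A t).Nonempty
  rad : ∀ t < m, ∃ ρ ≤ k, (t ∈ N → ρ + (N.filter (· < t)).card ≤ k) ∧
    ∀ v ∈ A t, ∃ s ∈ T t, Rch G w (Ω t) (ρ * β) s v
  adj : ∀ t ∈ N, ∀ u ∈ N, t ≠ u → ∃ a ∈ A t, ∃ b ∈ A u, G.Adj a b
  sep : ∀ v ∈ C, ∀ z, z ∉ C → G.Adj v z → ∃ u < m, z ∈ A u
  act : ∀ u < m, u ∉ N → ∀ v ∈ C, ∀ z ∈ A u, ¬ G.Adj v z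
  hist : ∀ m' < m, ∃ M : Finset ℕ, M.card ≤ k ∧ ∀ t < m', t ∉ M → t ∉ N ∧ Dropd G w β A C t m'
  cur : ∀ t < m, t ∉ N → Dropd G w β A C t m
  zone : ∀ t < m, ∀ i ∈ I, ∃ s ∈ T t, ∃ q : G.Walk s (L.x i), wl w q ≤ R ∧
    (∀ z ∈ q.support, z ∈ Ω t ∧ ∀ u < t, z ∉ Zn G w δ Ω T u)
  lad : ∀ j ∈ I, ∀ i ∈ I, ∀ h : j < i, ∀ z ∈ (L.W j i h).support, z ∈ C ∧
    ∀ t < m, z ∉ Zn G w δ Ω T t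

variable {G : SimpleGraph V} {w : Sym2 V → ℕ} {β δ k R : ℕ} {ℓ : ℕ} {L : Lad G w ℓ}
    {m : ℕ} {Ω A T : ℕ → Set V} {N : Finset ℕ} {C : Set V} {I : Finset (Fin ℓ)}

theorem Inv.aZn (hI : Inv G w β δ k R L m Ω A T N C I) (hkδ : k * β ≤ δ) {t : ℕ} (ht : t < m) :
    A t ⊆ Zn G w δ Ω T t := by
  intro v hv
  obtain ⟨ρ, hρ, -, h⟩ := hI.rad t ht
  obtain ⟨s, hs, h⟩ := h v hv
  exact ⟨s, hs, h.mono subset_rfl ((Nat.mul_le_mul_right _ hρ).trans hkδ)⟩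

/-- ladder walks contained in `S` are contained in one component of `S` -/
theorem lad_cmp (hI : 2 ≤ I.card) {S : Set V}
    (hS : ∀ j ∈ I, ∀ i ∈ I, ∀ h : j < i, ∀ z ∈ (L.W j i h).support, z ∈ S) :
    ∃ o ∈ S, ∀ j ∈ I, ∀ i ∈ I, ∀ h : j < i, ∀ z ∈ (L.W j i h).support, z ∈ cmp G S o := by
  have hne : I.Nonempty := Finset.card_pos.mp (by omega)
  have hlt : I.min' hne < I.max' hne := Finset.min'_lt_max'_of_card I (by omega)
  have hm := I.min'_mem hne
  have hM := I.max'_mem hne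
  set a := I.min' hne with ha
  set b := I.max' hne with hb
  have hpa : L.p a ∈ S := hS a hm b hM hlt _ (L.W a b hlt).start_mem_support
  refine ⟨L.p a, hpa, ?_⟩
  have ho : L.p a ∈ cmp G S (L.p a) := ⟨SimpleGraph.Walk.nil, by simpa using hpa⟩
  have hxb : L.x b ∈ cmp G S (L.p a) :=
    cmp_walk ho _ (hS a hm b hM hlt) _ (L.W a b hlt).end_mem_support
  intro j hj i hi h
  have hjb : j < b := lt_of_lt_of_le h (I.le_max' i hi)
  have hpj : L.p j ∈ cmp G S (L.p a) :=
    cmp_walk hxb (L.W j b hjb).reverse (by simpa using hS j hj b hM hjb) _ (by simp)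
  exact cmp_walk hpj _ (hS j hj i hi h)

/-- hitting `A u` from the arena -/
def Hit (G : SimpleGraph V) (w : Sym2 V → ℕ) (A : ℕ → Set V) (C : Set V) (v : V) (u d : ℕ) : Prop :=
  ∃ (y : V) (q : G.Walk v y), (∀ z ∈ q.support, z ∈ C) ∧ ∃ a ∈ A u, G.Adj y a ∧
    wl w q + w s(y, a) = d

/-- `v` belongs to the Voronoi cell of `u` -/
def Own (G : SimpleGraph V) (w : Sym2 V → ℕ) (β : ℕ) (A : ℕ → Set V) (C : Set V) (M : Finset ℕ)
    (v : V) (u d : ℕ) : Prop :=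
  u ∈ M ∧ d < β ∧ Hit G w A C v u d ∧
    ∀ u' ∈ M, ∀ d', Hit G w A C v u' d' → d < d' ∨ (d = d' ∧ u ≤ u')

theorem own_exists {M : Finset ℕ} {v : V} {u d : ℕ} (hu : u ∈ M) (hd : d < β)
    (h : Hit G w A C v u d) : ∃ u' d', Own G w β A C M v u' d' := by
  classical
  have hex : ∃ d, ∃ u ∈ M, Hit G w A C v u d := ⟨d, u, hu, h⟩
  have h1 := Nat.find_spec hex
  have h2 : Nat.find hex ≤ d := Nat.find_le ⟨u, hu, h⟩
  refine ⟨Nat.find h1, Nat.find hex, (Nat.find_spec h1).1, by omega, (Nat.find_spec h1).2, ?_⟩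
  intro u' hu' d' h'
  have h3 : Nat.find hex ≤ d' := Nat.find_le ⟨u', hu', h'⟩
  rcases Nat.eq_or_lt_of_le h3 with h4 | h4
  · right
    refine ⟨h4, Nat.find_le ⟨hu', by rw [h4]; exact h'⟩⟩
  · left; exact h4

theorem own_unique {M : Finset ℕ} {v : V} {u d u' d' : ℕ} (h : Own G w β A C M v u d)
    (h' : Own G w β A C M v u' d') : u = u' := by
  have h1 := h.2.2.2 u' h'.1 d' h'.2.2.1
  have h2 := h'.2.2.2 u h.1 d h.2.2.1
  omega

theorem own_mem {M : Finset ℕ} {v : V} {u d : ℕ} (h : Own G w β A C M v u d) : v ∈ C := by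
  obtain ⟨-, -, ⟨y, q, hq, -⟩, -⟩ := h
  exact hq _ q.start_mem_support

theorem own_walk {M : Finset ℕ} {v y : V} (q : G.Walk v y) : ∀ {u : ℕ} {a : V},
    (∀ z ∈ q.support, z ∈ C) →
    a ∈ A u → G.Adj y a → Own G w β A C M v u (wl w q + w s(y, a)) →
    ∃ q' : G.Walk v a, wl w q' = wl w q + w s(y, a) ∧ ∀ z ∈ q'.support, z ∈ A u ∪ {v | ∃ d, Own G w β A C M v u d} := by
  induction q with
  | @nil v =>
    intro u a hq ha hya ho
    refine ⟨SimpleGraph.Walk.cons hya SimpleGraph.Walk.nil, ?_, ?_⟩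
    · simp [wl_cons, wl_nil]
    · intro z hz
      simp at hz
      rcases hz with rfl | rfl
      · exact Or.inr ⟨_, ho⟩
      · exact Or.inl ha
  | @cons v v1 y hv q ih =>
    intro u a hq ha hya ho
    have hq' : ∀ z ∈ q.support, z ∈ C := fun z hz => hq z (by simp [hz])
    have ho1 : Own G w β A C M v1 u (wl w q + w s(y, a)) := by
      obtain ⟨h1, h2, h3, h4⟩ := ho
      rw [wl_cons] at h2 h4
      refine ⟨h1, by omega, ⟨y, q, hq', a, ha, hya, rfl⟩, ?_⟩
      rintro u' hu' d' ⟨y', q1, hq1, a', ha', hya', hd'⟩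
      have := h4 u' hu' (w s(v, v1) + d') ⟨y', SimpleGraph.Walk.cons hv q1, ?_, a', ha', hya', ?_⟩
      · omega
      · intro z hz
        simp at hz
        rcases hz with rfl | hz
        · exact hq z (by simp)
        · exact hq1 z hz
      · rw [wl_cons]; omega
    obtain ⟨q', hq'1, hq'2⟩ := ih hq' ha hya ho1
    refine ⟨SimpleGraph.Walk.cons hv q', by rw [wl_cons, wl_cons]; omega, ?_⟩
    intro z hz
    simp only [SimpleGraph.Walk.support_cons, List.mem_cons] at hz
    rcases hz with rfl | hz
    · exact Or.inr ⟨_, ho⟩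
    · exact hq'2 z hz

theorem own_rch {M : Finset ℕ} {v : V} {u d : ℕ} (h : Own G w β A C M v u d) :
    ∃ a ∈ A u, Rch G w (A u ∪ {v | ∃ d, Own G w β A C M v u d}) β v a := by
  have h0 := h
  obtain ⟨h1, h2, ⟨y, q, hq, a, ha, hya, rfl⟩, h4⟩ := h
  obtain ⟨q', hq', hq''⟩ := own_walk q hq ha hya h0
  exact ⟨a, ha, q', by omega, hq''⟩

theorem WConn.of_center {G : SimpleGraph V} {S A : Set V} (hA : WConn G A) (hAS : A ⊆ S)
    (h : ∀ v ∈ S, ∃ a ∈ A, ∃ p : G.Walk v a, ∀ x ∈ p.support, x ∈ S) : WConn G S := by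
  intro u hu v hv
  obtain ⟨a, ha, p, hp⟩ := h u hu
  obtain ⟨b, hb, q, hq⟩ := h v hv
  obtain ⟨r, hr⟩ := hA a ha b hb
  refine ⟨p.append (r.append q.reverse), fun x hx => ?_⟩
  simp only [SimpleGraph.Walk.mem_support_append_iff, SimpleGraph.Walk.support_reverse,
    List.mem_reverse] at hx
  rcases hx with hx | hx | hx
  · exact hp x hx
  · exact hAS (hr x hx)
  · exact hq x hx

theorem drop_step (hI : Inv G w β δ k R L m Ω A T N C I) (hkδ : k * β ≤ δ) (hI2 : 2 ≤ I.card)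
    {t : ℕ} (ht : t ∈ N) (hadj : ∀ v ∈ C, ∀ z ∈ A t, ¬ G.Adj v z) :
    ∃ A' C', Inv G w β δ k R L m Ω A' T (N.erase t) C' I := by
  classical
  set M := N.filter (t < ·) with hM
  have htm := hI.nlt t ht
  let F : ℕ → Set V := fun u => {v | ∃ d, Own G w β A C M v u d}
  have hFC : ∀ u, F u ⊆ C := fun u v ⟨d, h⟩ => own_mem h
  have hFM : ∀ u v, v ∈ F u → u ∈ M := fun u v ⟨d, h⟩ => h.1
  let A' : ℕ → Set V := fun u => A u ∪ F u
  have hAA' : ∀ u, A u ⊆ A' u := fun u => Set.subset_union_left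
  have hA'eq : ∀ u, u ∉ M → A' u = A u := by
    intro u hu
    ext v
    constructor
    · rintro (h | h)
      · exact h
      · exact absurd (hFM u v h) hu
    · exact fun h => Or.inl h
  have hMN : ∀ u ∈ M, u ∈ N ∧ t < u := fun u hu => by simpa [hM] using hu
  have htM : t ∉ M := fun h => lt_irrefl _ (hMN t h).2
  have haΩ' : ∀ u < m, A' u ⊆ Ω u := by
    intro u hu v hv
    rcases hv with hv | hv
    · exact hI.aΩ u hu hv
    · exact hI.cΩ u hu (hFC u hv)
  have hrad : ∀ u < m, ∃ ρ ≤ k, (u ∈ N.erase t → ρ + ((N.erase t).filter (· < u)).card ≤ k) ∧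
      ∀ v ∈ A' u, ∃ s ∈ T u, Rch G w (Ω u) (ρ * β) s v := by
    intro u hu
    obtain ⟨ρ, h1, h2, h3⟩ := hI.rad u hu
    by_cases huM : u ∈ M
    · obtain ⟨huN, htu⟩ := hMN u huM
      have h4 := h2 huN
      have h5 : ((N.erase t).filter (· < u)).card + 1 = (N.filter (· < u)).card := by
        have : (N.erase t).filter (· < u) = (N.filter (· < u)).erase t := by
          ext z; simp; tauto
        rw [this, Finset.card_erase_add_one]
        simp [ht, htu]
      refine ⟨ρ + 1, by omega, fun _ => by omega, ?_⟩
      intro v hv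
      rcases hv with hv | ⟨d, hv⟩
      · obtain ⟨s, hs, h⟩ := h3 v hv
        exact ⟨s, hs, h.mono subset_rfl (Nat.mul_le_mul_right _ (by omega))⟩
      · obtain ⟨a, ha, h⟩ := own_rch hv
        obtain ⟨s, hs, h'⟩ := h3 a ha
        refine ⟨s, hs, ?_⟩
        have := h'.trans (h.symm.mono (haΩ' u hu) le_rfl)
        rwa [Nat.add_mul, one_mul]
    · refine ⟨ρ, h1, fun hu' => ?_, ?_⟩
      · refine le_trans (Nat.add_le_add_left (Finset.card_le_card ?_) _) (h2 (Finset.mem_of_mem_erase hu'))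
        exact Finset.filter_subset_filter _ (Finset.erase_subset _ _)
      · rw [hA'eq u huM]; exact h3
  have hA'Z : ∀ u < m, A' u ⊆ Zn G w δ Ω T u := by
    intro u hu v hv
    obtain ⟨ρ, hρ, -, h⟩ := hrad u hu
    obtain ⟨s, hs, h⟩ := h v hv
    exact ⟨s, hs, h.mono subset_rfl ((Nat.mul_le_mul_right _ hρ).trans hkδ)⟩
  let S : Set V := {v | v ∈ C ∧ ∀ u, v ∉ F u}
  have hlad : ∀ j ∈ I, ∀ i ∈ I, ∀ h : j < i, ∀ z ∈ (L.W j i h).support, z ∈ S := by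
    intro j hj i hi h z hz
    obtain ⟨h1, h2⟩ := hI.lad j hj i hi h z hz
    refine ⟨h1, fun u hu => ?_⟩
    have hum := hI.nlt u (hMN u (hFM u z hu)).1
    exact h2 u hum (hA'Z u hum (Or.inr hu))
  obtain ⟨o, ho, hcmp⟩ := lad_cmp hI2 hlad
  have hSC : S ⊆ C := fun v hv => hv.1
  have hC'S : cmp G S o ⊆ S := cmp_sub
  have hC'C : cmp G S o ⊆ C := hC'S.trans hSC
  have hsep : ∀ v ∈ cmp G S o, ∀ z, z ∉ cmp G S o → G.Adj v z → ∃ u < m, u ≠ t ∧ z ∈ A' u := by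
    intro v hv z hz hvz
    by_cases hzC : z ∈ C
    · have : ∃ u, z ∈ F u := by
        by_contra hc
        push Not at hc
        exact hz (cmp_adj hv ⟨hzC, hc⟩ hvz)
      obtain ⟨u, hu⟩ := this
      have := hMN u (hFM u z hu)
      exact ⟨u, hI.nlt u this.1, by omega, Or.inr hu⟩
    · obtain ⟨u, hu, hzu⟩ := hI.sep v (hC'C hv) z hzC hvz
      refine ⟨u, hu, ?_, Or.inl hzu⟩
      rintro rfl
      exact hadj v (hC'C hv) z hzu hvz
  -- hitting claim
  have hhit : ∀ (y y' : V) (q : G.Walk y y'), y ∈ C → (∀ z ∈ q.support, ∀ u ≤ t, z ∉ A' u) →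
      (∃ a ∈ A' t, G.Adj y' a) → ∃ u ∈ M, ∃ d ≤ wl w q, Hit G w A C y u d := by
    intro y y' q
    induction q with
    | nil =>
      rintro hy - ⟨a, ha, hya⟩
      rw [hA'eq t htM] at ha
      exact absurd hya (hadj _ hy a ha)
    | @cons y y1 y' h q ih =>
      intro hy hq ha
      have hq1 : ∀ z ∈ q.support, ∀ u ≤ t, z ∉ A' u := fun z hz => hq z (by simp [hz])
      by_cases hy1 : y1 ∈ C
      · obtain ⟨u, hu, d, hd, yy, q', hq', a, haa, hya, hda⟩ := ih hy1 hq1 ha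
        refine ⟨u, hu, w s(y, y1) + d, by rw [wl_cons]; omega, yy, SimpleGraph.Walk.cons h q', ?_,
          a, haa, hya, by rw [wl_cons]; omega⟩
        intro z hz
        simp only [SimpleGraph.Walk.support_cons, List.mem_cons] at hz
        rcases hz with rfl | hz
        · exact hy
        · exact hq' z hz
      · obtain ⟨u, hu, hyu⟩ := hI.sep y hy y1 hy1 h
        have huN : u ∈ N := by
          by_contra hc
          exact hI.act u hu hc y hy y1 hyu h
        have htu : t < u := by
          by_contra hc
          exact hq1 y1 q.start_mem_support u (by omega) (hAA' u hyu)
        refine ⟨u, by simp [hM, huN, htu], w s(y, y1), by rw [wl_cons]; omega, y,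
          SimpleGraph.Walk.nil, by simpa using hy, y1, hyu, h, by rw [wl_nil]; omega⟩
  have hne : ∀ u, u ∉ N → A' u = A u := fun u hu => hA'eq u (fun h => hu (hMN u h).1)
  refine ⟨A', cmp G S o, ?_⟩
  refine
  { conn := cmp_conn
    nlt := fun u hu => hI.nlt u (Finset.mem_of_mem_erase hu)
    cΩ := fun u hu => hC'C.trans (hI.cΩ u hu)
    cA := ?_
    aΩ := haΩ'
    tA := fun u hu => (hI.tA u hu).trans (hAA' u)
    disj := ?_
    aconn := ?_
    ane := fun u hu => (hI.ane u hu).mono (hAA' u)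
    rad := hrad
    adj := ?_
    sep := ?_
    act := ?_
    hist := ?_
    cur := ?_
    zone := hI.zone
    lad := fun j hj i hi h z hz => ⟨hcmp j hj i hi h z hz, (hI.lad j hj i hi h z hz).2⟩ }
  · rintro u hu v hv (h | h)
    · exact hI.cA u hu v (hC'C hv) h
    · exact (hC'S hv).2 u h
  · intro u hu u' hu' hne
    rw [Set.disjoint_left]
    rintro v (h | h) (h' | h')
    · exact Set.disjoint_left.mp (hI.disj u hu u' hu' hne) h h'
    · exact hI.cA u hu v (hFC _ h') h
    · exact hI.cA u' hu' v (hFC _ h) h'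
    · obtain ⟨d, h⟩ := h
      obtain ⟨d', h'⟩ := h'
      exact hne (own_unique h h')
  · intro u hu
    refine WConn.of_center (hI.aconn u hu) (hAA' u) ?_
    rintro v (hv | ⟨d, hv⟩)
    · exact ⟨v, hv, SimpleGraph.Walk.nil, by simpa using hAA' u hv⟩
    · obtain ⟨a, ha, p, -, hp⟩ := own_rch hv
      exact ⟨a, ha, p, hp⟩
  · intro u hu u' hu' hne
    obtain ⟨a, ha, b, hb, hab⟩ := hI.adj u (Finset.mem_of_mem_erase hu) u' (Finset.mem_of_mem_erase hu') hne
    exact ⟨a, hAA' u ha, b, hAA' u' hb, hab⟩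
  · intro v hv z hz hvz
    obtain ⟨u, hu, -, hzu⟩ := hsep v hv z hz hvz
    exact ⟨u, hu, hzu⟩
  · intro u hu huN v hv z hz
    by_cases hut : u = t
    · subst hut
      rw [hA'eq u htM] at hz
      exact hadj v (hC'C hv) z hz
    · have huN' : u ∉ N := fun h => huN (Finset.mem_erase.mpr ⟨hut, h⟩)
      rw [hne u huN'] at hz
      exact hI.act u hu huN' v (hC'C hv) z hz
  · intro m' hm'
    obtain ⟨M', hc, h⟩ := hI.hist m' hm'
    refine ⟨M', hc, fun u hu huM => ?_⟩
    obtain ⟨h1, h2⟩ := h u hu huM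
    exact ⟨fun h => h1 (Finset.mem_of_mem_erase h),
      h2.mono (m := m) (by omega) (by omega) hC'C (fun u _ => hAA' u) (hne u h1)⟩
  · intro u hu huN
    by_cases hut : u = t
    · subst hut
      refine ⟨cmp G S o, m, subset_rfl, le_rfl, hsep, ?_⟩
      intro y hy y' q hq ha
      by_contra hc
      obtain ⟨v, hv, d, hd, hh⟩ := hhit y y' q (hC'C hy) hq ha
      obtain ⟨u', d', hown⟩ := own_exists (β := β) hv (by omega) hh
      exact (hC'S hy).2 u' ⟨d', hown⟩
    · have huN' : u ∉ N := fun h => huN (Finset.mem_erase.mpr ⟨hut, h⟩)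
      exact (hI.cur u hu huN').mono (m := m) hu le_rfl hC'C (fun u _ => hAA' u) (hne u huN')

theorem normalize (hkδ : k * β ≤ δ) (hI2 : 2 ≤ I.card) : ∀ (n : ℕ) (N : Finset ℕ) (A : ℕ → Set V) (C : Set V),
    N.card = n → Inv G w β δ k R L m Ω A T N C I →
    ∃ A' N' C', Inv G w β δ k R L m Ω A' T N' C' I ∧ ∀ t ∈ N', ∃ v ∈ C', ∃ z ∈ A' t, G.Adj v z := by
  intro n
  induction n with
  | zero =>
    intro N A C hN hI
    refine ⟨A, N, C, hI, ?_⟩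
    rw [Finset.card_eq_zero] at hN
    simp [hN]
  | succ n ih =>
    intro N A C hN hI
    by_cases h : ∀ t ∈ N, ∃ v ∈ C, ∃ z ∈ A t, G.Adj v z
    · exact ⟨A, N, C, hI, h⟩
    · push Not at h
      obtain ⟨t, ht, h⟩ := h
      obtain ⟨A', C', hI'⟩ := drop_step hI hkδ hI2 ht h
      exact ih _ A' C' (by rw [Finset.card_erase_of_mem ht]; omega) hI'

end Game

section Game2

variable {G : SimpleGraph V} {w : Sym2 V → ℕ} {β δ k R : ℕ} {ℓ : ℕ} {L : Lad G w ℓ}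
    {m : ℕ} {Ω A T : ℕ → Set V} {N : Finset ℕ} {C : Set V} {I : Finset (Fin ℓ)}

theorem clique_bound (hI : Inv G w β δ k R L m Ω A T N C I)
    (hnorm : ∀ t ∈ N, ∃ v ∈ C, ∃ z ∈ A t, G.Adj v z) (hC : C.Nonempty) {g : ℕ}
    (hminor : ¬ HasCompleteMinor G (g + 1)) : N.card < g := by
  by_contra hc
  push Not at hc
  apply hminor
  obtain ⟨N', hN', hcard⟩ := Finset.exists_subset_card_eq hc
  let e := N'.orderEmbOfFin hcard
  have he : ∀ i, e i ∈ N := fun i => hN' (N'.orderEmbOfFin_mem hcard i)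
  have hem : ∀ i, e i < m := fun i => hI.nlt _ (he i)
  have hinj : ∀ i j, i ≠ j → e i ≠ e j := fun i j h h' => h (e.injective h')
  have hCA : ∀ i, Disjoint C (A (e i)) := fun i =>
    Set.disjoint_left.mpr (fun v hv => hI.cA _ (hem i) v hv)
  refine ⟨Fin.cases C (fun i => A (e i)), ?_, ?_, ?_⟩
  · intro i
    refine Fin.cases ?_ (fun i => ?_) i
    · exact hI.conn.connected hC
    · exact (hI.aconn _ (hem i)).connected (hI.ane _ (hem i))
  · intro i j
    refine Fin.cases ?_ (fun i => ?_) i <;> refine Fin.cases ?_ (fun j => ?_) j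
    · intro h; exact absurd rfl h
    · intro _; exact hCA j
    · intro _; exact (hCA i).symm
    · intro h
      exact hI.disj _ (hem i) _ (hem j) (hinj i j (fun h' => h (by rw [h'])))
  · intro i j
    refine Fin.cases ?_ (fun i => ?_) i <;> refine Fin.cases ?_ (fun j => ?_) j
    · intro h; exact absurd rfl h
    · intro _; exact hnorm _ (he j)
    · intro _
      obtain ⟨v, hv, z, hz, h⟩ := hnorm _ (he i)
      exact ⟨z, hz, v, hv, h.symm⟩
    · intro h
      exact hI.adj _ (he i) _ (he j) (hinj i j (fun h' => h (by rw [h'])))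

theorem geo_net {o y : V} (hδ : 0 < δ) (q : G.Walk o y) (hq : ∀ z ∈ q.support, z ∈ C)
    (hmin : ∀ q' : G.Walk o y, (∀ z ∈ q'.support, z ∈ C) → wl w q ≤ wl w q') :
    ∃ f : ℕ → V, ∀ v ∈ q.support, ∀ D, Rch G w C D o v →
      ∃ s ≤ D / δ, Rch G w C δ (f s) v := by
  classical
  let P : ℕ → V → Prop := fun s v => v ∈ q.support ∧ ∃ (q1 : G.Walk o v) (q2 : G.Walk v y),
    wl w q1 + wl w q2 = wl w q ∧ (∀ x ∈ q1.support, x ∈ q.support) ∧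
    (∀ x ∈ q2.support, x ∈ q.support) ∧ wl w q1 / δ = s
  let f : ℕ → V := fun s => if h : ∃ v, P s v then h.choose else o
  have hf : ∀ s, (∃ v, P s v) → P s (f s) := by
    intro s h
    have : f s = h.choose := dif_pos h
    rw [this]; exact h.choose_spec
  have key : ∀ (v : V) (q2 : G.Walk v y) (r : G.Walk o v), (∀ x ∈ q2.support, x ∈ q.support) →
      (∀ x ∈ r.support, x ∈ C) → wl w q ≤ wl w r + wl w q2 := by
    intro v q2 r h2 hr
    rw [← wl_append]
    apply hmin
    intro z hz
    rw [SimpleGraph.Walk.mem_support_append_iff] at hz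
    exact hz.elim (hr z) (fun h => hq z (h2 z h))
  refine ⟨f, fun v hv D hD => ?_⟩
  obtain ⟨q1, q2, h1, h2, h3, h4⟩ := walk_split w q hv
  obtain ⟨r, hr, hrC⟩ := hD
  have h5 := key v q2 r h3 hrC
  refine ⟨wl w q1 / δ, Nat.div_le_div_right (by omega), ?_⟩
  have hP := hf (wl w q1 / δ) ⟨v, hv, q1, q2, h1, h2, h3, rfl⟩
  generalize f (wl w q1 / δ) = v' at hP ⊢
  obtain ⟨hv', q1', q2', h1', h2', h3', hs⟩ := hP
  have hd1 := Nat.div_add_mod (wl w q1) δ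
  have hd2 := Nat.div_add_mod (wl w q1') δ
  have hm1 := Nat.mod_lt (wl w q1) hδ
  have hm2 := Nat.mod_lt (wl w q1') hδ
  rw [hs] at hd2
  rcases h4 v' hv' with h | h
  · obtain ⟨r1, r2, g1, g2, g3, -⟩ := walk_split w q1 h
    have := key v' q2' r1 h3' (fun x hx => hq x (h2 x (g2 x hx)))
    exact ⟨r2, by omega, fun x hx => hq x (h2 x (g3 x hx))⟩
  · obtain ⟨r1, r2, g1, g2, g3, -⟩ := walk_split w q2 h
    have := key v' r2 q1' (fun x hx => h3 x (g3 x hx)) (fun x hx => hq x (h2' x hx))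
    exact Rch.symm ⟨r1, by omega, fun x hx => hq x (h3 x (g2 x hx))⟩

theorem geo_set {o y : V} (hδ : 0 < δ) (w : Sym2 V → ℕ) (h : ∃ q : G.Walk o y, ∀ z ∈ q.support, z ∈ C) :
    ∃ (Q : Set V) (f : ℕ → V), y ∈ Q ∧ Q ⊆ C ∧
      (∀ v ∈ Q, ∃ q : G.Walk v o, ∀ z ∈ q.support, z ∈ Q) ∧
      ∀ v ∈ Q, ∀ D, Rch G w C D o v → ∃ s ≤ D / δ, Rch G w C δ (f s) v := by
  classical
  have hex : ∃ n, ∃ q : G.Walk o y, (∀ z ∈ q.support, z ∈ C) ∧ wl w q = n := by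
    obtain ⟨q, hq⟩ := h
    exact ⟨_, q, hq, rfl⟩
  obtain ⟨q, hq, hn⟩ := Nat.find_spec hex
  obtain ⟨f, hf⟩ := geo_net (w := w) hδ q hq (fun q' hq' => by
    rw [hn]; exact Nat.find_le ⟨q', hq', rfl⟩)
  refine ⟨{z | z ∈ q.support}, f, q.end_mem_support, hq, ?_, hf⟩
  intro v hv
  obtain ⟨q1, q2, -, h2, -⟩ := walk_split w q hv
  exact ⟨q1.reverse, by simpa using h2⟩

theorem round_step (hI : Inv G w β δ k R L m Ω A T N C I) (hδ : 0 < δ)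
    (hN : N.card ≤ k) (hnorm : ∀ t ∈ N, ∃ v ∈ C, ∃ z ∈ A t, G.Adj v z) (hI2 : 2 ≤ I.card)
    {a : ℕ} (hR : R = a * δ) (hW : ∀ j i h, wl w (L.W j i h) ≤ R)
    (hfar : ∀ i, ∀ q : G.Walk (L.p i) (L.x i), R + 5 * δ < wl w q) :
    ∃ I' : Finset (Fin ℓ), I.card - 1 ≤ 2 ^ ((k + 1) * ((2 * a + 2) * (a + 4))) * I'.card ∧
      (2 ≤ I'.card → ∃ Ω' A' T' N' C', Inv G w β δ k R L (m + 1) Ω' A' T' N' C' I') := by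
  classical
  have hne : I.Nonempty := Finset.card_pos.mp (by omega)
  have hlt : I.min' hne < I.max' hne := Finset.min'_lt_max'_of_card I (by omega)
  have hm := I.min'_mem hne
  have hM := I.max'_mem hne
  set α := I.min' hne with hα
  have hαlt : ∀ i ∈ I, i ≠ α → α < i := fun i hi h => lt_of_le_of_ne (I.min'_le i hi) h.symm
  set o := L.p α with ho
  have hoC : o ∈ C := (hI.lad α hm _ hM hlt _ (L.W α _ hlt).start_mem_support).1
  have : Nonempty V := ⟨o⟩
  choose! yv hyC hyadj using hnorm
  have hgeo : ∀ y ∈ C, ∃ (Q : Set V) (f : ℕ → V), y ∈ Q ∧ Q ⊆ C ∧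
      (∀ v ∈ Q, ∃ q : G.Walk v o, ∀ z ∈ q.support, z ∈ Q) ∧
      ∀ v ∈ Q, ∀ D, Rch G w C D o v → ∃ s ≤ D / δ, Rch G w C δ (f s) v :=
    fun y hy => geo_set hδ w (hI.conn o hoC y hy)
  choose! Q f hQy hQC hQo hQf using hgeo
  let Y : Finset V := insert o (N.image yv)
  have hYC : ∀ y ∈ Y, y ∈ C := by
    intro y hy
    simp only [Y, Finset.mem_insert, Finset.mem_image] at hy
    rcases hy with rfl | ⟨t, ht, rfl⟩
    · exact hoC
    · exact hyC t ht
  have hYcard : Y.card ≤ k + 1 := by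
    refine (Finset.card_insert_le _ _).trans ?_
    have := Finset.card_image_le (s := N) (f := yv)
    omega
  let T0 : Set V := {v | ∃ y ∈ Y, v ∈ Q y}
  have hoT : o ∈ T0 := ⟨o, by simp [Y], hQy o hoC⟩
  have hTC : T0 ⊆ C := fun v ⟨y, hy, hv⟩ => hQC y (hYC y hy) hv
  have hTconn : WConn G T0 := by
    refine WConn.of_center (A := {o}) ?_ (by simpa using hoT) ?_
    · rintro u rfl v rfl
      exact ⟨SimpleGraph.Walk.nil, by simp⟩
    · rintro v ⟨y, hy, hv⟩
      obtain ⟨q, hq⟩ := hQo y (hYC y hy) v hv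
      exact ⟨o, rfl, q, fun z hz => ⟨y, hy, hq z hz⟩⟩
  -- profiles
  let P : Finset (V × ℕ × ℕ) := Y ×ˢ (Finset.range (2 * a + 2) ×ˢ Finset.range (a + 4))
  let prof : Fin ℓ → Finset (V × ℕ × ℕ) := fun i =>
    P.filter (fun c => Rch G w C (c.2.2 * δ) (f c.1 c.2.1) (L.x i))
  have hPcard : P.card ≤ (k + 1) * ((2 * a + 2) * (a + 4)) := by
    simp only [P, Finset.card_product, Finset.card_range]
    exact Nat.mul_le_mul_right _ hYcard
  obtain ⟨c0, hc0, hcard⟩ : ∃ c0 ∈ P.powerset, (I.erase α).card ≤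
      P.powerset.card * ((I.erase α).filter (fun i => prof i = c0)).card := by
    by_contra hc
    push Not at hc
    have h1 : (I.erase α).card = ∑ c0 ∈ P.powerset, ((I.erase α).filter (fun i => prof i = c0)).card :=
      Finset.card_eq_sum_card_fiberwise (fun i _ => by
        simp only [Finset.coe_powerset, Set.mem_preimage, Set.mem_powerset_iff, Finset.coe_subset, prof]
        exact Finset.filter_subset _ _)
    have h2 : ∑ c0 ∈ P.powerset, P.powerset.card * ((I.erase α).filter (fun i => prof i = c0)).card
        < ∑ c0 ∈ P.powerset, (I.erase α).card :=
      Finset.sum_lt_sum_of_nonempty ⟨∅, by simp⟩ hc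
    rw [← Finset.mul_sum, ← h1, Finset.sum_const, smul_eq_mul] at h2
    exact lt_irrefl _ h2
  set I' := (I.erase α).filter (fun i => prof i = c0) with hI'
  have hI'm : ∀ i ∈ I', i ∈ I ∧ α < i ∧ prof i = c0 := by
    intro i hi
    simp only [hI', Finset.mem_filter, Finset.mem_erase] at hi
    exact ⟨hi.1.2, hαlt i hi.1.2 hi.1.1, hi.2⟩
  refine ⟨I', ?_, fun hI'2 => ?_⟩
  · rw [Finset.card_erase_of_mem hm, Finset.card_powerset] at hcard
    exact hcard.trans (Nat.mul_le_mul_right _ (Nat.pow_le_pow_right (by norm_num) hPcard))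
  let Ω' := Function.update Ω m C
  let A' := Function.update A m T0
  let T' := Function.update T m T0
  have eΩ : ∀ t < m, Ω' t = Ω t := fun t ht => Function.update_of_ne (by omega) _ _
  have eA : ∀ t < m, A' t = A t := fun t ht => Function.update_of_ne (by omega) _ _
  have eT : ∀ t < m, T' t = T t := fun t ht => Function.update_of_ne (by omega) _ _
  have eΩm : Ω' m = C := Function.update_self ..
  have eAm : A' m = T0 := Function.update_self ..
  have eTm : T' m = T0 := Function.update_self ..
  have eZ : ∀ t < m, Zn G w δ Ω' T' t = Zn G w δ Ω T t := by
    intro t ht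
    simp only [Zn, eΩ t ht, eT t ht]
  have hkill : ∀ j ∈ I', ∀ i ∈ I', ∀ h : j < i, ∀ z ∈ (L.W j i h).support, z ∉ Zn G w δ Ω' T' m := by
    rintro j hj i hi h z hz ⟨v, hv, hvz⟩
    rw [eTm] at hv
    rw [eΩm] at hvz
    obtain ⟨hjI, hαj, hpj⟩ := hI'm j hj
    obtain ⟨hiI, hαi, hpi⟩ := hI'm i hi
    have hWC : ∀ z ∈ (L.W j i h).support, z ∈ C := fun z hz => (hI.lad j hjI i hiI h z hz).1
    obtain ⟨q1, q2, h1, h2, h3, -⟩ := walk_split w (L.W j i h) hz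
    have hle := hW j i h
    have r1 : Rch G w C (wl w q1) (L.p j) z := ⟨q1, le_rfl, fun x hx => hWC x (h2 x hx)⟩
    have r2 : Rch G w C (wl w q2) z (L.x i) := ⟨q2, le_rfl, fun x hx => hWC x (h3 x hx)⟩
    have r0 : Rch G w C R o (L.x i) := ⟨L.W α i hαi, hW α i hαi, fun x hx =>
      (hI.lad α hm i hiI hαi x hx).1⟩
    have r3 : Rch G w C ((2 * a + 1) * δ) o v := by
      refine ((r0.trans r2.symm).trans hvz.symm).mono subset_rfl ?_
      have : (2 * a + 1) * δ = R + R + δ := by rw [hR]; ring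
      omega
    obtain ⟨y, hy, hvy⟩ := hv
    obtain ⟨s, hs, hb⟩ := hQf y (hYC y hy) v hvy _ r3
    rw [Nat.mul_div_cancel _ hδ] at hs
    set s' := wl w q2 / δ + 3 with hs'
    have hd := Nat.div_add_mod (wl w q2) δ
    have hmod := Nat.mod_lt (wl w q2) hδ
    have hs'δ : s' * δ = δ * (wl w q2 / δ) + 3 * δ := by rw [hs']; ring
    have hs'a : s' < a + 4 := by
      have : wl w q2 / δ ≤ a := by
        rw [← Nat.mul_div_cancel a hδ]
        exact Nat.div_le_div_right (by omega)
      omega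
    have r4 : Rch G w C (s' * δ) (f y s) (L.x i) := by
      refine ((hb.trans hvz).trans r2).mono subset_rfl ?_
      omega
    have hmem : (y, s, s') ∈ prof i := by
      simp only [prof, P, Finset.mem_filter, Finset.mem_product, Finset.mem_range]
      exact ⟨⟨hy, by omega, hs'a⟩, r4⟩
    rw [hpi, ← hpj] at hmem
    have r5 : Rch G w C (s' * δ) (f y s) (L.x j) := (Finset.mem_filter.mp hmem).2
    obtain ⟨q, hq, -⟩ := ((r1.trans hvz.symm).trans hb.symm).trans r5
    have := hfar j q
    omega
  have hTZ : T0 ⊆ Zn G w δ Ω' T' m := by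
    intro v hv
    refine ⟨v, by rwa [eTm], Rch.refl (by rw [eΩm]; exact hTC hv)⟩
  let S : Set V := C \ T0
  have hlad : ∀ j ∈ I', ∀ i ∈ I', ∀ h : j < i, ∀ z ∈ (L.W j i h).support, z ∈ S := by
    intro j hj i hi h z hz
    exact ⟨(hI.lad j (hI'm j hj).1 i (hI'm i hi).1 h z hz).1, fun hzT => hkill j hj i hi h z hz (hTZ hzT)⟩
  obtain ⟨o', ho', hcmp⟩ := lad_cmp hI'2 hlad
  have hC'S : cmp G S o' ⊆ S := cmp_sub
  have hC'C : cmp G S o' ⊆ C := hC'S.trans Set.sdiff_subset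
  have hmN : m ∉ N := fun h => lt_irrefl _ (hI.nlt m h)
  refine ⟨Ω', A', T', insert m N, cmp G S o', ?_⟩
  have hcases : ∀ t, t < m + 1 → t < m ∨ t = m := fun t ht => by omega
  have hdm : ∀ t m', t < m → m' ≤ m → Dropd G w β A C t m' → Dropd G w β A' (cmp G S o') t m' :=
    fun t m' ht hm' h => h.mono (m := m) ht hm' hC'C (fun u hu => by rw [eA u hu]) (eA t ht)
  refine
  { conn := cmp_conn
    nlt := ?_
    cΩ := ?_
    cA := ?_
    aΩ := ?_
    tA := ?_
    disj := ?_
    aconn := ?_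
    ane := ?_
    rad := ?_
    adj := ?_
    sep := ?_
    act := ?_
    hist := ?_
    cur := ?_
    zone := ?_
    lad := ?_ }
  · intro t ht
    rcases Finset.mem_insert.mp ht with rfl | ht
    · omega
    · have := hI.nlt t ht; omega
  · intro t ht
    rcases hcases t ht with ht | rfl
    · rw [eΩ t ht]; exact hC'C.trans (hI.cΩ t ht)
    · rw [eΩm]; exact hC'C
  · intro t ht v hv
    rcases hcases t ht with ht | rfl
    · rw [eA t ht]; exact hI.cA t ht v (hC'C hv)
    · rw [eAm]; exact (hC'S hv).2
  · intro t ht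
    rcases hcases t ht with ht | rfl
    · rw [eA t ht, eΩ t ht]; exact hI.aΩ t ht
    · rw [eAm, eΩm]; exact hTC
  · intro t ht
    rcases hcases t ht with ht | rfl
    · rw [eA t ht, eT t ht]; exact hI.tA t ht
    · rw [eAm, eTm]
  · have hd : ∀ t < m, Disjoint (A t) T0 := fun t ht =>
      Set.disjoint_left.mpr (fun v hv hv' => hI.cA t ht v (hTC hv') hv)
    intro t ht u hu hne
    rcases hcases t ht with ht | rfl <;> rcases hcases u hu with hu | rfl
    · rw [eA t ht, eA u hu]; exact hI.disj t ht u hu hne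
    · rw [eA t ht, eAm]; exact hd t ht
    · rw [eA u hu, eAm]; exact (hd u hu).symm
    · exact absurd rfl hne
  · intro t ht
    rcases hcases t ht with ht | rfl
    · rw [eA t ht]; exact hI.aconn t ht
    · rw [eAm]; exact hTconn
  · intro t ht
    rcases hcases t ht with ht | rfl
    · rw [eA t ht]; exact hI.ane t ht
    · rw [eAm]; exact ⟨o, hoT⟩
  · intro t ht
    rcases hcases t ht with ht | rfl
    · obtain ⟨ρ, h1, h2, h3⟩ := hI.rad t ht
      refine ⟨ρ, h1, fun h => ?_, ?_⟩
      · have h4 : t ∈ N := (Finset.mem_insert.mp h).resolve_left (by omega)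
        rw [Finset.filter_insert, if_neg (by omega)]
        exact h2 h4
      · rw [eA t ht, eT t ht, eΩ t ht]; exact h3
    · refine ⟨0, by omega, fun _ => ?_, ?_⟩
      · rw [Finset.filter_insert, if_neg (by omega), zero_add]
        exact (Finset.card_filter_le _ _).trans hN
      · rw [eAm, eTm, eΩm]
        exact fun v hv => ⟨v, hv, Rch.refl (hTC hv)⟩
  · have hd : ∀ t ∈ N, ∃ b ∈ T0, ∃ z ∈ A t, G.Adj b z := by
      intro t ht
      obtain ⟨z, hz, h⟩ := hyadj t ht
      refine ⟨yv t, ⟨yv t, ?_, hQy _ (hyC t ht)⟩, z, hz, h⟩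
      simp only [Y, Finset.mem_insert, Finset.mem_image]
      exact Or.inr ⟨t, ht, rfl⟩
    intro t ht0 u hu0 hne
    rcases Finset.mem_insert.mp ht0 with h1 | ht <;> rcases Finset.mem_insert.mp hu0 with h2 | hu
    · exact absurd (h1.trans h2.symm) hne
    · rw [h1, eAm, eA u (hI.nlt u hu)]; exact hd u hu
    · rw [h2, eAm, eA t (hI.nlt t ht)]
      obtain ⟨b, hb, z, hz, h⟩ := hd t ht
      exact ⟨z, hz, b, hb, h.symm⟩
    · rw [eA t (hI.nlt t ht), eA u (hI.nlt u hu)]; exact hI.adj t ht u hu hne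
  · intro v hv z hz hvz
    by_cases hzC : z ∈ C
    · refine ⟨m, by omega, ?_⟩
      rw [eAm]
      by_contra hzT
      exact hz (cmp_adj hv ⟨hzC, hzT⟩ hvz)
    · obtain ⟨u, hu, hzu⟩ := hI.sep v (hC'C hv) z hzC hvz
      exact ⟨u, by omega, by rwa [eA u hu]⟩
  · intro u hu huN v hv z hz
    have h1 : u < m := by
      rcases hcases u hu with h | rfl
      · exact h
      · exact absurd (Finset.mem_insert_self _ _) huN
    rw [eA u h1] at hz
    exact hI.act u h1 (fun h => huN (Finset.mem_insert_of_mem h)) v (hC'C hv) z hz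
  · intro m' hm'
    rcases hcases m' hm' with hm' | rfl
    · obtain ⟨M, hc, h⟩ := hI.hist m' hm'
      refine ⟨M, hc, fun t ht htM => ?_⟩
      obtain ⟨g1, g2⟩ := h t ht htM
      refine ⟨?_, hdm t m' (by omega) (by omega) g2⟩
      intro h'
      rcases Finset.mem_insert.mp h' with h' | h'
      · omega
      · exact g1 h'
    · refine ⟨N, hN, fun t ht htN => ⟨?_, hdm t _ ht le_rfl (hI.cur t ht htN)⟩⟩
      intro h'
      rcases Finset.mem_insert.mp h' with h' | h'
      · omega
      · exact htN h'
  · intro t ht htN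
    have h1 : t < m := by
      rcases hcases t ht with h | rfl
      · exact h
      · exact absurd (Finset.mem_insert_self _ _) htN
    obtain ⟨K, m'', g1, g2, g3⟩ := hdm t m h1 le_rfl (hI.cur t h1 (fun h => htN (Finset.mem_insert_of_mem h)))
    exact ⟨K, m'', g1, by omega, g3⟩
  · intro t ht i hi
    obtain ⟨hiI, hαi, -⟩ := hI'm i hi
    rcases hcases t ht with ht | rfl
    · rw [eT t ht, eΩ t ht]
      obtain ⟨s, hs, q, hq, h⟩ := hI.zone t ht i hiI
      refine ⟨s, hs, q, hq, fun z hz => ⟨(h z hz).1, fun u hu => ?_⟩⟩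
      rw [eZ u (by omega)]
      exact (h z hz).2 u hu
    · rw [eTm, eΩm]
      refine ⟨o, hoT, L.W α i hαi, hW _ _ _, fun z hz => ?_⟩
      have := hI.lad α hm i hiI hαi z hz
      refine ⟨this.1, fun u hu => ?_⟩
      rw [eZ u hu]
      exact this.2 u hu
  · intro j hj i hi h z hz
    refine ⟨hcmp j hj i hi h z hz, fun t ht => ?_⟩
    rcases hcases t ht with ht | rfl
    · rw [eZ t ht]
      exact (hI.lad j (hI'm j hj).1 i (hI'm i hi).1 h z hz).2 t ht
    · exact hkill j hj i hi h z hz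

end Game2

section Game3

variable {G : SimpleGraph V} {w : Sym2 V → ℕ} {β δ k R : ℕ} {ℓ : ℕ} {L : Lad G w ℓ}
    {m : ℕ} {Ω A T : ℕ → Set V} {N : Finset ℕ} {C : Set V} {I : Finset (Fin ℓ)}

/-- `d` is the length of a walk from `x` to the boundary of `A t` avoiding earlier sets -/
def Ew (G : SimpleGraph V) (w : Sym2 V → ℕ) (A : ℕ → Set V) (x : V) (t d : ℕ) : Prop :=
  ∃ (y : V) (q : G.Walk x y), wl w q = d ∧ (∀ z ∈ q.support, ∀ u ≤ t, z ∉ A u) ∧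
    ∃ a ∈ A t, G.Adj y a

theorem ew_drop (hβ : 1 ≤ β) {t m'' : ℕ} {K : Set V} {y' : V}
    (h3 : ∀ v ∈ K, ∀ z, z ∉ K → G.Adj v z → ∃ u < m'', u ≠ t ∧ z ∈ A u)
    (h4 : ∀ y ∈ K, ∀ (y' : V) (q : G.Walk y y'), (∀ z ∈ q.support, ∀ u ≤ t, z ∉ A u) →
      (∃ a ∈ A t, G.Adj y' a) → β ≤ wl w q) (hy' : ∃ a ∈ A t, G.Adj y' a) {x : V}
    (p : G.Walk x y') : x ∈ K → (∀ u < m'', x ∉ A u) → (∀ z ∈ p.support, ∀ u ≤ t, z ∉ A u) →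
    ∃ u, t < u ∧ u < m'' ∧ ∃ (y : V) (p1 : G.Walk x y), (∀ z ∈ p1.support, ∀ u' < m'', z ∉ A u') ∧
      (∃ a ∈ A u, G.Adj y a) ∧ wl w p1 + β ≤ wl w p := by
  induction p with
  | @nil x =>
    intro hx _ hp
    have := h4 x hx x SimpleGraph.Walk.nil hp hy'
    rw [wl_nil] at this
    omega
  | @cons x x1 y' hadj p ih =>
    intro hx hxA hp
    by_cases hx1 : ∃ u < m'', x1 ∈ A u
    · obtain ⟨u, hu, hxu⟩ := hx1
      refine ⟨u, ?_, hu, x, SimpleGraph.Walk.nil, ?_, ⟨x1, hxu, hadj⟩, ?_⟩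
      · by_contra hc
        exact hp x1 (by simp) u (by omega) hxu
      · intro z hz
        simp at hz
        subst hz
        exact hxA
      · rw [wl_nil, zero_add]
        exact h4 x hx y' _ hp hy'
    · have hK : x1 ∈ K := by
        by_contra hc
        obtain ⟨u, hu, -, h⟩ := h3 x hx x1 hc hadj
        exact hx1 ⟨u, hu, h⟩
      obtain ⟨u, h1, h2, y, p1, h5, h6, h7⟩ := ih hy' hK (fun u hu h => hx1 ⟨u, hu, h⟩)
        (fun z hz => hp z (by simp [hz]))
      refine ⟨u, h1, h2, y, SimpleGraph.Walk.cons hadj p1, ?_, h6, ?_⟩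
      · intro z hz
        simp at hz
        rcases hz with rfl | hz
        · exact hxA
        · exact h5 z hz
      · rw [wl_cons, wl_cons]; omega

theorem final_bound (hI : Inv G w β δ k R L m Ω A T N C I) (hkδ : k * β ≤ δ) (hβ : 1 ≤ β)
    (hI2 : 2 ≤ I.card) (hN : N.card ≤ k) {n : ℕ} (hn : R ≤ n * β) :
    m + 1 ≤ (n + 1 + k).choose k := by
  classical
  have hne : I.Nonempty := Finset.card_pos.mp (by omega)
  have hlt : I.min' hne < I.max' hne := Finset.min'_lt_max'_of_card I (by omega)
  have hm := I.min'_mem hne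
  have hM := I.max'_mem hne
  set x := L.x (I.max' hne) with hx
  have hxC : x ∈ C := (hI.lad _ hm _ hM hlt _ (L.W _ _ hlt).end_mem_support).1
  have hxA : ∀ u < m, x ∉ A u := fun u hu => hI.cA u hu x hxC
  have hE : ∀ t < m, ∃ d ≤ R, Ew G w A x t d := by
    intro t ht
    obtain ⟨s, hs, q, hq, hz⟩ := hI.zone t ht _ hM
    obtain ⟨y, q', h1, h2, h3⟩ := first_hit w (A t) q.reverse (hxA t ht) (hI.tA t ht hs)
    refine ⟨wl w q', by rw [wl_reverse] at h1; omega, y, q', rfl, ?_, h3⟩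
    intro z hz' u hu hzA
    obtain ⟨h4, h5⟩ := h2 z hz'
    rcases Nat.eq_or_lt_of_le hu with rfl | hu
    · exact h5 hzA
    · exact (hz z (by simpa using h4)).2 u hu (hI.aZn hkδ (by omega) hzA)
  let E : ℕ → ℕ := fun t => sInf {d | Ew G w A x t d}
  have hEm : ∀ t < m, Ew G w A x t (E t) := fun t ht => by
    obtain ⟨d, -, hd⟩ := hE t ht
    exact Nat.sInf_mem (s := {d | Ew G w A x t d}) ⟨d, hd⟩
  have hEle : ∀ t d, Ew G w A x t d → E t ≤ d := fun t d h => Nat.sInf_le h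
  have hdrop : ∀ t m', m' ≤ m → t < m' → Dropd G w β A C t m' → ∃ u, t < u ∧ u < m' ∧
      E u / β < E t / β := by
    rintro t m' hm' ht ⟨K, m'', h1, h2, h3, h4⟩
    obtain ⟨y', p, hp, hpA, hy'⟩ := hEm t (by omega)
    obtain ⟨u, g1, g2, y, p1, g3, g4, g5⟩ := ew_drop hβ h3 h4 hy' p (h1 hxC)
      (fun u hu => hxA u (by omega)) hpA
    refine ⟨u, g1, by omega, ?_⟩
    have h6 : E u ≤ wl w p1 := hEle _ _ ⟨y, p1, rfl, fun z hz u' hu' => g3 z hz u' (by omega), g4⟩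
    have h7 : (E u + β) / β ≤ E t / β := Nat.div_le_div_right (by omega)
    rw [Nat.add_div_right _ (by omega)] at h7
    omega
  have := stack_lemma (fun t => E t / β) k (n + 1) 0 0 m (by omega) ?_ ?_
  · simpa using this
  · intro t _ ht
    refine ⟨Nat.zero_le _, ?_⟩
    obtain ⟨d, hd, hd'⟩ := hE t ht
    have h1 := hEle _ _ hd'
    have h2 : E t / β ≤ n := Nat.div_le_of_le_mul (by rw [mul_comm]; omega)
    show E t / β < _
    omega
  · intro m' _ hm'
    obtain ⟨M, hMk, hMM⟩ : ∃ M : Finset ℕ, M.card ≤ k ∧ ∀ t < m', t ∉ M → Dropd G w β A C t m' := by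
      rcases Nat.eq_or_lt_of_le hm' with rfl | hm'
      · exact ⟨N, hN, hI.cur⟩
      · obtain ⟨M, h1, h2⟩ := hI.hist m' hm'
        exact ⟨M, h1, fun t ht htM => (h2 t ht htM).2⟩
    refine (Finset.card_le_card ?_).trans hMk
    intro t ht
    simp only [Finset.mem_filter, Finset.mem_Ico] at ht
    by_contra htM
    obtain ⟨u, h1, h2, h3⟩ := hdrop t m' hm' ht.1.2 (hMM t ht.1.2 htM)
    have := ht.2 u h1 h2
    omega

theorem inv_init (hI2 : 2 ≤ I.card) :
    ∃ Ω A T N C, Inv G w β δ k R L 0 Ω A T N C I := by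
  obtain ⟨o, -, ho⟩ := lad_cmp (L := L) (S := Set.univ) hI2 (fun _ _ _ _ _ _ _ => trivial)
  refine ⟨fun _ => ∅, fun _ => ∅, fun _ => ∅, ∅, cmp G Set.univ o, ?_⟩
  refine
  { conn := cmp_conn
    nlt := by simp
    cΩ := by simp
    cA := by simp
    aΩ := by simp
    tA := by simp
    disj := by simp
    aconn := by simp
    ane := by simp
    rad := by simp
    adj := by simp
    sep := fun v hv z hz h => absurd (cmp_adj hv trivial h) hz
    act := by simp
    hist := by simp
    cur := by simp
    zone := by simp
    lad := fun j hj i hi h z hz => ⟨ho j hj i hi h z hz, by simp⟩ }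

theorem main_nat {a : ℕ} (hminor : ¬ HasCompleteMinor G (k + 2)) (hβ : 1 ≤ β) (hkδ : k * β ≤ δ)
    (hδ : 0 < δ) (hR : R = a * δ) {n : ℕ} (hn : R ≤ n * β)
    (hW : ∀ j i h, wl w (L.W j i h) ≤ R)
    (hfar : ∀ i, ∀ q : G.Walk (L.p i) (L.x i), R + 5 * δ < wl w q) :
    ℓ < 2 * (2 * 2 ^ ((k + 1) * ((2 * a + 2) * (a + 4)))) ^ ((n + 1 + k).choose k) := by
  set D := 2 ^ ((k + 1) * ((2 * a + 2) * (a + 4))) with hD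
  have hD1 : 1 ≤ D := Nat.one_le_two_pow
  by_contra hc
  push Not at hc
  have norm : ∀ m (I : Finset (Fin ℓ)), 2 ≤ I.card →
      (∃ Ω A T N C, Inv G w β δ k R L m Ω A T N C I) →
      ∃ Ω A T N C, Inv G w β δ k R L m Ω A T N C I ∧ N.card ≤ k ∧
        ∀ t ∈ N, ∃ v ∈ C, ∃ z ∈ A t, G.Adj v z := by
    rintro m I hI2 ⟨Ω, A, T, N, C, hI⟩
    obtain ⟨A', N', C', h1, h2⟩ := normalize hkδ hI2 N.card N A C rfl hI
    refine ⟨Ω, A', T, N', C', h1, ?_, h2⟩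
    have hne : I.Nonempty := Finset.card_pos.mp (by omega)
    have hlt : I.min' hne < I.max' hne := Finset.min'_lt_max'_of_card I (by omega)
    have hC : C'.Nonempty := ⟨_, (h1.lad _ (I.min'_mem hne) _ (I.max'_mem hne) hlt _
      (L.W _ _ hlt).end_mem_support).1⟩
    have := clique_bound h1 h2 hC hminor
    omega
  set J := (n + 1 + k).choose k with hJ
  have step : ∀ j ≤ J, ∃ I : Finset (Fin ℓ), 2 * (2 * D) ^ (J - j) ≤ I.card ∧
      ∃ Ω A T N C, Inv G w β δ k R L j Ω A T N C I := by
    intro j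
    induction j with
    | zero =>
      intro _
      refine ⟨Finset.univ, by simpa using hc, inv_init ?_⟩
      have : 1 ≤ (2 * D) ^ J := Nat.one_le_pow _ _ (by omega)
      simp only [Finset.card_univ, Fintype.card_fin]
      omega
    | succ j ih =>
      intro hj
      obtain ⟨I, hcard, hI⟩ := ih (by omega)
      have h1 : J - j = (J - (j + 1)) + 1 := by omega
      have h3 : 1 ≤ (2 * D) ^ (J - (j + 1)) := Nat.one_le_pow _ _ (by omega)
      rw [h1, pow_succ] at hcard
      set P := (2 * D) ^ (J - (j + 1)) with hP
      have hPD : P ≤ P * D := Nat.le_mul_of_pos_right _ hD1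
      have hcard' : 4 * (P * D) ≤ I.card := by
        refine le_trans (le_of_eq ?_) hcard
        ring
      have hI2 : 2 ≤ I.card := by omega
      obtain ⟨Ω, A, T, N, C, hI, hN, hnorm⟩ := norm j I hI2 hI
      obtain ⟨I', h4, h5⟩ := round_step hI hδ hN hnorm hI2 hR hW hfar
      have h6 : 2 * P ≤ I'.card := by
        by_contra hlt
        push Not at hlt
        have h7 : D * I'.card ≤ D * (2 * P - 1) := Nat.mul_le_mul_left _ (by omega)
        have h8 : D * (2 * P - 1) + D = 2 * (P * D) := by
          obtain ⟨Q, hQ⟩ : ∃ Q, 2 * P = Q + 1 := ⟨2 * P - 1, by omega⟩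
          have : 2 * (P * D) = (2 * P) * D := by ring
          rw [this, hQ]
          simp only [Nat.add_sub_cancel]
          ring
        rw [← hD] at h4
        omega
      exact ⟨I', h6, h5 (by omega)⟩
  obtain ⟨I, hcard, hI⟩ := step J le_rfl
  simp only [Nat.sub_self, pow_zero, mul_one] at hcard
  obtain ⟨Ω, A, T, N, C, hI, hN, hnorm⟩ := norm J I hcard hI
  have := final_bound hI hkδ hβ hcard hN hn
  omega

end Game3

section Reduction

/-- remove edges of infinite weight -/
def finG (G : SimpleGraph V) (w : Sym2 V → ℝ≥0∞) : SimpleGraph V where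
  Adj u v := G.Adj u v ∧ w s(u, v) ≠ ⊤
  symm := ⟨fun u v h => ⟨h.1.symm, by rw [Sym2.eq_swap]; exact h.2⟩⟩
  loopless := ⟨fun u h => G.loopless.irrefl u h.1⟩

theorem finG_le (G : SimpleGraph V) (w : Sym2 V → ℝ≥0∞) : finG G w ≤ G := fun _ _ h => h.1

theorem minor_mono {G G' : SimpleGraph V} (hle : G' ≤ G) {h : ℕ} (hm : HasCompleteMinor G' h) :
    HasCompleteMinor G h := by
  obtain ⟨B, h1, h2, h3⟩ := hm
  refine ⟨B, fun i => (h1 i).mono ?_, h2, fun i j hij => ?_⟩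
  · intro a b hab
    exact hle hab
  · obtain ⟨u, hu, v, hv, h⟩ := h3 i j hij
    exact ⟨u, hu, v, hv, hle h⟩

theorem list_ceil_le {α : Type} (f : α → ℝ≥0∞) (K : ℝ) (hK : 0 < K) (l : List α) :
    (((l.map (fun e => ⌈(f e).toReal * K⌉₊)).sum : ℕ) : ℝ) ≤
      (l.map (fun e => (f e).toReal)).sum * K + l.length := by
  induction l with
  | nil => simp
  | cons e l ih =>
    have := (Nat.ceil_lt_add_one (a := (f e).toReal * K) (by positivity)).le
    simp only [List.map_cons, List.sum_cons, List.length_cons, Nat.cast_add, Nat.cast_one]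
    linarith

theorem list_le_ceil {α : Type} (f : α → ℝ≥0∞) (K : ℝ) (l : List α) :
    (l.map (fun e => (f e).toReal)).sum * K ≤
    (((l.map (fun e => ⌈(f e).toReal * K⌉₊)).sum : ℕ) : ℝ) := by
  induction l with
  | nil => simp
  | cons e l ih =>
    have := Nat.le_ceil ((f e).toReal * K)
    simp only [List.map_cons, List.sum_cons, Nat.cast_add]
    linarith

theorem list_toReal {α : Type} (f : α → ℝ≥0∞) (l : List α) (h : ∀ e ∈ l, f e ≠ ⊤) :
    (l.map f).sum = ENNReal.ofReal (l.map (fun e => (f e).toReal)).sum := by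
  induction l with
  | nil => simp
  | cons e l ih =>
    simp only [List.map_cons, List.sum_cons]
    rw [ih (fun e he => h e (by simp [he])), ENNReal.ofReal_add (by positivity),
      ENNReal.ofReal_toReal (h e (by simp))]
    apply List.sum_nonneg
    intro x hx
    simp only [List.mem_map] at hx
    obtain ⟨e, -, rfl⟩ := hx
    positivity

theorem list_fin {α : Type} (f : α → ℝ≥0∞) (l : List α) (h : (l.map f).sum ≠ ⊤) :
    ∀ e ∈ l, f e ≠ ⊤ := by
  intro e he h'
  apply h
  have := List.single_le_sum (l := l.map f) (by simp) (f e) (List.mem_map_of_mem he)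
  rw [h'] at this
  exact top_le_iff.mp this

theorem walk_fin {G : SimpleGraph V} {w : Sym2 V → ℝ≥0∞} {u v : V} (p : G.Walk u v)
    (h : walkWeight w p ≠ ⊤) : ∃ q : (finG G w).Walk u v, q.edges = p.edges := by
  have h1 := list_fin w p.edges h
  have h2 : ∀ e ∈ p.edges, e ∈ (finG G w).edgeSet := by
    intro e he
    have h3 := p.edges_subset_edgeSet he
    have h4 := h1 e he
    induction e with
    | _ a b => exact ⟨h3, h4⟩
  exact ⟨p.transfer _ h2, p.edges_transfer h2⟩

theorem real_bound {k : ℕ} {ε r : ℝ} (hε : 0 < ε) (hr : 0 < r) (G : SimpleGraph V)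
    (w : Sym2 V → ℝ≥0∞) (hminor : ¬ HasCompleteMinor G (k + 2)) {ℓ : ℕ} {x p : Fin ℓ → V}
    (hL : IsLadder (gdist G w) ε r ℓ x p) {a : ℕ} (ha1 : 7 / ε < a) (ha2 : (a : ℝ) ≤ 7 / ε + 1) :
    ℓ < 2 * (2 * 2 ^ ((k + 1) * ((2 * a + 2) * (a + 4)))) ^ ((a * (k + 2) + 1 + k).choose k) := by
  obtain ⟨hclose, hfar⟩ := hL
  set d := ε * r / 7 with hd
  have hd0 : 0 < d := by positivity
  have had : r < a * d := by
    have : 7 / ε * d = r := by rw [hd]; field_simp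
    nlinarith
  have had2 : (a + 5) * d ≤ (1 + ε) * r := by
    have : 7 / ε * d = r := by rw [hd]; field_simp
    have h7 : 7 * d = ε * r := by rw [hd]; ring
    nlinarith
  have hwalk : ∀ j i : Fin ℓ, j < i → ∃ q : (finG G w).Walk (p j) (x i),
      (q.edges.map (fun e => (w e).toReal)).sum < a * d := by
    intro j i hji
    have h1 : gdist G w (p j) (x i) < ENNReal.ofReal (a * d) :=
      (hclose i j hji).trans_lt ((ENNReal.ofReal_lt_ofReal_iff (by linarith)).mpr had)
    obtain ⟨q, hq⟩ := iInf_lt_iff.mp h1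
    have hq' : walkWeight w q ≠ ⊤ := (hq.trans ENNReal.ofReal_lt_top).ne
    obtain ⟨q', he⟩ := walk_fin q hq'
    refine ⟨q', ?_⟩
    rw [he]
    unfold walkWeight at hq
    rw [list_toReal w _ (list_fin w _ hq'), ENNReal.ofReal_lt_ofReal_iff (by linarith)] at hq
    exact hq
  choose W hW using hwalk
  have hev : ∀ᶠ K : ℕ in Filter.atTop, 1 ≤ K ∧ ∀ j i : Fin ℓ, ∀ h : j < i,
      ((W j i h).edges.length : ℝ) * d ≤
        K * (a * d - ((W j i h).edges.map (fun e => (w e).toReal)).sum) := by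
    refine (Filter.eventually_ge_atTop 1).and ?_
    rw [Filter.eventually_all]; intro j
    rw [Filter.eventually_all]; intro i
    rw [Filter.eventually_all]; intro h
    have h1 := hW j i h
    have : Filter.Tendsto (fun K : ℕ => (K : ℝ) *
        (a * d - ((W j i h).edges.map (fun e => (w e).toReal)).sum)) Filter.atTop Filter.atTop :=
      tendsto_natCast_atTop_atTop.atTop_mul_const (by linarith)
    exact this.eventually_ge_atTop _
  obtain ⟨K, hK1, hK⟩ := hev.exists
  have hK0 : (0 : ℝ) < K := by exact_mod_cast hK1
  set κ : ℝ := (((k + 2) * K : ℕ) : ℝ) / d with hκ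
  have hκd : κ * d = (((k + 2) * K : ℕ) : ℝ) := by rw [hκ]; field_simp
  have hκ0 : 0 < κ := by
    rw [hκ]; push_cast; positivity
  let w' : Sym2 V → ℕ := fun e => ⌈(w e).toReal * κ⌉₊
  let L : Lad (finG G w) w' ℓ := ⟨x, p, W⟩
  have key := main_nat (G := finG G w) (w := w') (β := K) (δ := (k + 2) * K) (k := k)
    (R := a * ((k + 2) * K)) (L := L) (a := a) (n := a * (k + 2))
    (fun h => hminor (minor_mono (finG_le G w) h)) hK1 (by nlinarith) (by positivity) rfl
    (by rw [mul_assoc]) ?_ ?_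
  · exact key
  · intro j i h
    have h1 := list_ceil_le w κ hκ0 (W j i h).edges
    have h2 := hK j i h
    have h3 := hW j i h
    set s := ((W j i h).edges.map (fun e => (w e).toReal)).sum with hs
    set n := (W j i h).edges.length with hn
    have h4 : (n : ℝ) ≤ κ * (a * d - s) := by
      have h5 : (n : ℝ) ≤ K / d * (a * d - s) := by
        rw [div_mul_eq_mul_div, le_div_iff₀ hd0]; exact h2
      refine h5.trans (mul_le_mul_of_nonneg_right ?_ (by linarith))
      rw [hκ]
      gcongr
      push_cast
      nlinarith
    have h6 : ((wl w' (W j i h) : ℕ) : ℝ) ≤ ((a * ((k + 2) * K) : ℕ) : ℝ) := by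
      refine h1.trans ?_
      have : ((a * ((k + 2) * K) : ℕ) : ℝ) = a * (κ * d) := by rw [hκd]; push_cast; ring
      rw [this]
      nlinarith
    exact_mod_cast h6
  · intro i q
    have h1 := list_le_ceil w κ q.edges
    have h2 : ENNReal.ofReal ((1 + ε) * r) < walkWeight w (q.mapLe (finG_le G w)) :=
      (hfar i).trans_le (iInf_le _ _)
    unfold walkWeight at h2
    rw [SimpleGraph.Walk.edges_mapLe_eq_edges] at h2
    have h3 : ∀ e ∈ q.edges, w e ≠ ⊤ := by
      intro e he
      have h3 := q.edges_subset_edgeSet he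
      induction e with
      | _ a b => exact h3.2
    rw [list_toReal w _ h3, ENNReal.ofReal_lt_ofReal_iff_of_nonneg (by positivity)] at h2
    set s := (q.edges.map (fun e => (w e).toReal)).sum with hs
    have h6 : ((a * ((k + 2) * K) + 5 * ((k + 2) * K) : ℕ) : ℝ) < ((wl w' q : ℕ) : ℝ) := by
      refine lt_of_lt_of_le ?_ h1
      have : ((a * ((k + 2) * K) + 5 * ((k + 2) * K) : ℕ) : ℝ) = (a + 5) * (κ * d) := by
        rw [hκd]; push_cast; ring
      rw [this]
      nlinarith
    exact_mod_cast h6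

theorem small_bound {ε r : ℝ} (hε : 3 ≤ ε) (hr : 0 < r) (G : SimpleGraph V)
    (w : Sym2 V → ℝ≥0∞) {ℓ : ℕ} {x p : Fin ℓ → V}
    (hL : IsLadder (gdist G w) ε r ℓ x p) : ℓ ≤ 2 := by
  by_contra hc
  push Not at hc
  obtain ⟨hclose, hfar⟩ := hL
  have hw : ∀ i j : Fin ℓ, j < i → ∃ q : G.Walk (p j) (x i), walkWeight w q < ENNReal.ofReal (4 / 3 * r) := by
    intro i j h
    exact iInf_lt_iff.mp ((hclose i j h).trans_lt
      ((ENNReal.ofReal_lt_ofReal_iff (by linarith)).mpr (by linarith)))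
  obtain ⟨q1, h1⟩ := hw ⟨2, by omega⟩ ⟨1, by omega⟩ (by simp [Fin.lt_def])
  obtain ⟨q2, h2⟩ := hw ⟨2, by omega⟩ ⟨0, by omega⟩ (by simp [Fin.lt_def])
  obtain ⟨q3, h3⟩ := hw ⟨1, by omega⟩ ⟨0, by omega⟩ (by simp [Fin.lt_def])
  have h4 := (hfar ⟨1, by omega⟩).trans_le (iInf_le _ (q1.append (q2.reverse.append q3)))
  have h5 : walkWeight w (q1.append (q2.reverse.append q3)) =
      walkWeight w q1 + (walkWeight w q2 + walkWeight w q3) := by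
    simp [walkWeight, List.sum_reverse]
  rw [h5] at h4
  have h6 : walkWeight w q1 + (walkWeight w q2 + walkWeight w q3) ≤ ENNReal.ofReal ((1 + ε) * r) := by
    calc _ ≤ ENNReal.ofReal (4 / 3 * r) + (ENNReal.ofReal (4 / 3 * r) + ENNReal.ofReal (4 / 3 * r)) := by
          gcongr
      _ = ENNReal.ofReal (4 / 3 * r + (4 / 3 * r + 4 / 3 * r)) := by
          rw [ENNReal.ofReal_add (by positivity) (by positivity),
            ENNReal.ofReal_add (by positivity) (by positivity)]
      _ ≤ _ := ENNReal.ofReal_le_ofReal (by nlinarith)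
  exact absurd h4 (not_lt.mpr h6)

theorem rhs_bound {ε c : ℝ} (hε : 0 < ε) (hc : 1 ≤ c) :
    (2 : ℝ) ^ (c * (c + 1)) ≤ (6 * c * (9 / ε + 2) ^ c) ^ (c + 1) := by
  rw [Real.rpow_mul (by norm_num)]
  apply Real.rpow_le_rpow (by positivity) _ (by linarith)
  have h1 : (2 : ℝ) ^ c ≤ (9 / ε + 2) ^ c := by
    apply Real.rpow_le_rpow (by norm_num) _ (by linarith)
    have : 0 < 9 / ε := by positivity
    linarith
  have h2 : (0 : ℝ) ≤ (9 / ε + 2) ^ c := by positivity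
  nlinarith

theorem arith {k a : ℕ} {ε : ℝ} (hε : 0 < ε) (hε3 : ε < 3) (ha2 : (a : ℝ) ≤ 7 / ε + 1) {c : ℝ}
    (hc : c = ((k + 2 * ⌈36 * ((k : ℝ) + 2) / ε⌉₊).choose (k + 1) : ℝ) * (12 + 72 / ε) * ((k : ℝ) + 1)) :
    ((2 * (2 * 2 ^ ((k + 1) * ((2 * a + 2) * (a + 4)))) ^ ((a * (k + 2) + 1 + k).choose k) : ℕ) : ℝ)
      ≤ (2 : ℝ) ^ (c * (c + 1)) := by
  set X := 2 * ⌈36 * ((k : ℝ) + 2) / ε⌉₊ with hX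
  set J := (a * (k + 2) + 1 + k).choose k with hJ
  set B := (k + X).choose (k + 1) with hB
  set u := 1 / ε with hu
  have hu3 : 1 / 3 < u := by rw [hu]; exact one_div_lt_one_div_of_lt hε hε3
  have e7 : 7 / ε = 7 * u := by rw [hu]; ring
  have e72 : 72 / ε = 72 * u := by rw [hu]; ring
  rw [e7] at ha2
  rw [e72] at hc
  have hk0 : (0 : ℝ) ≤ k := Nat.cast_nonneg k
  have hXr : 72 * u * (k + 2) ≤ (X : ℝ) := by
    have := Nat.le_ceil (36 * ((k : ℝ) + 2) / ε)
    have e : 36 * ((k : ℝ) + 2) / ε = 36 * u * (k + 2) := by rw [hu]; ring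
    rw [hX]; push_cast
    rw [e] at this ⊢
    linarith
  have hX1 : a * (k + 2) + 1 ≤ X := by
    have : ((a * (k + 2) + 1 : ℕ) : ℝ) ≤ X := by
      push_cast
      nlinarith
    exact_mod_cast this
  have hX2 : k + 2 ≤ X := by
    have : ((k + 2 : ℕ) : ℝ) ≤ X := by
      push_cast
      nlinarith
    exact_mod_cast this
  have hJB : J ≤ B := by
    calc J ≤ (k + X).choose k := Nat.choose_le_choose k (by omega)
      _ ≤ B := Nat.choose_le_succ_of_lt_half_left (by omega)
  have hB1 : 1 ≤ B := Nat.choose_pos (by omega)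
  have hJB' : (J : ℝ) ≤ B := by exact_mod_cast hJB
  have hB1' : (1 : ℝ) ≤ B := by exact_mod_cast hB1
  have e1 : 2 * (2 * 2 ^ ((k + 1) * ((2 * a + 2) * (a + 4)))) ^ J =
      2 ^ (1 + (1 + (k + 1) * ((2 * a + 2) * (a + 4))) * J) := by
    generalize (k + 1) * ((2 * a + 2) * (a + 4)) = M
    rw [pow_add, pow_one, pow_mul, pow_add 2 1, pow_one]
  rw [e1]
  push_cast
  rw [← Real.rpow_natCast]
  apply Real.rpow_le_rpow_of_exponent_le (by norm_num)
  push_cast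
  have ha0 : (0 : ℝ) ≤ a := Nat.cast_nonneg a
  set q : ℝ := 12 + 72 * u with hq
  have hS : (2 * (a : ℝ) + 2) * (a + 4) ≤ (14 * u + 4) * (7 * u + 5) := by
    apply mul_le_mul <;> nlinarith
  have hq2 : 2 + (14 * u + 4) * (7 * u + 5) ≤ q ^ 2 := by
    rw [hq]; nlinarith
  have hk1 : (1 : ℝ) ≤ k + 1 := by linarith
  have hS0 : (0 : ℝ) ≤ (2 * (a : ℝ) + 2) * (a + 4) := by positivity
  have hcsq : (B : ℝ) * (k + 1) * q ^ 2 ≤ c ^ 2 := by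
    have e : c ^ 2 = ((B : ℝ) * (k + 1)) * ((B : ℝ) * (k + 1) * q ^ 2) := by rw [hc]; ring
    rw [e]
    have h1 : (1 : ℝ) ≤ B * (k + 1) := by nlinarith
    have h2 : (0 : ℝ) ≤ (B : ℝ) * (k + 1) * q ^ 2 := by positivity
    nlinarith
  have hc0 : 0 ≤ c := by rw [hc]; positivity
  calc 1 + (1 + ((k : ℝ) + 1) * ((2 * a + 2) * (a + 4))) * J
      ≤ B * (k + 1) + ((k + 1) + ((k : ℝ) + 1) * ((14 * u + 4) * (7 * u + 5))) * B := by
        have h1 : (1 : ℝ) ≤ B * (k + 1) := by nlinarith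
        have h2 : (1 + ((k : ℝ) + 1) * ((2 * a + 2) * (a + 4))) ≤
          ((k + 1) + ((k : ℝ) + 1) * ((14 * u + 4) * (7 * u + 5))) := by
          have := mul_le_mul_of_nonneg_left hS (by linarith : (0 : ℝ) ≤ k + 1)
          linarith
        have h3 := mul_le_mul h2 hJB' (Nat.cast_nonneg J) (by positivity)
        linarith
    _ = B * (k + 1) * (2 + (14 * u + 4) * (7 * u + 5)) := by ring
    _ ≤ B * (k + 1) * q ^ 2 := by gcongr
    _ ≤ c ^ 2 := hcsq
    _ ≤ c * (c + 1) := by nlinarith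

end Reduction

theorem stmt_0 {V : Type} [Fintype V] (h : ℕ) (hh : 1 ≤ h) (ε : ℝ) (hε : 0 < ε)
    (G : SimpleGraph V) (w : Sym2 V → ℝ≥0∞)
    (hminor : ¬ HasCompleteMinor G h)
    (c : ℝ)
    (hc : c = ((h - 2 + 2 * ⌈36 * (h : ℝ) / ε⌉₊).choose (h - 1) : ℝ) *
      (12 + 72 / ε) * ((h : ℝ) - 1)) :
    ∀ r : ℝ, 0 < r → ∀ (ℓ : ℕ) (x p : Fin ℓ → V),
      IsLadder (gdist G w) ε r ℓ x p → (ℓ : ℝ) ≤ (6 * c * (9 / ε + 2) ^ c) ^ (c + 1) := by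
  intro r hr ℓ x p hL
  rcases Nat.eq_or_lt_of_le hh with h1 | h1
  · subst h1
    have hℓ : ℓ = 0 := by
      by_contra hne
      apply hminor
      refine ⟨fun _ => {x ⟨0, by omega⟩}, ?_, ?_, ?_⟩
      · intro i
        refine WConn.connected ?_ (Set.singleton_nonempty _)
        rintro u rfl v rfl
        exact ⟨SimpleGraph.Walk.nil, by simp⟩
      · intro i j hij
        exact absurd (Subsingleton.elim i j) hij
      · intro i j hij
        exact absurd (Subsingleton.elim i j) hij
    have hc0 : c = 0 := by rw [hc]; simp
    subst hℓ
    rw [hc0]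
    simp
  · obtain ⟨k, rfl⟩ : ∃ k, h = k + 2 := ⟨h - 2, by omega⟩
    have hc' : c = ((k + 2 * ⌈36 * ((k : ℝ) + 2) / ε⌉₊).choose (k + 1) : ℝ) *
        (12 + 72 / ε) * ((k : ℝ) + 1) := by
      rw [hc]
      have e1 : k + 2 - 2 = k := by omega
      have e2 : k + 2 - 1 = k + 1 := by omega
      rw [e1, e2]
      push_cast
      ring
    have hc1 : 1 ≤ c := by
      have h2 : 0 < ⌈36 * ((k : ℝ) + 2) / ε⌉₊ := Nat.ceil_pos.mpr (by positivity)
      have h3 : 1 ≤ (k + 2 * ⌈36 * ((k : ℝ) + 2) / ε⌉₊).choose (k + 1) :=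
        Nat.choose_pos (by omega)
      have h4 : (1 : ℝ) ≤ ((k + 2 * ⌈36 * ((k : ℝ) + 2) / ε⌉₊).choose (k + 1) : ℝ) := by
        exact_mod_cast h3
      have h5 : (1 : ℝ) ≤ 12 + 72 / ε := by
        have : 0 < 72 / ε := by positivity
        linarith
      have h6 : (1 : ℝ) ≤ (k : ℝ) + 1 := by
        have := Nat.cast_nonneg (α := ℝ) k
        linarith
      rw [hc']
      exact one_le_mul_of_one_le_of_one_le (one_le_mul_of_one_le_of_one_le h4 h5) h6
    refine le_trans ?_ (rhs_bound hε hc1)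
    rcases le_or_gt 3 ε with h3 | h3
    · have h2 : (ℓ : ℝ) ≤ 2 := by exact_mod_cast small_bound h3 hr G w hL
      refine h2.trans ?_
      calc (2 : ℝ) = 2 ^ (1 : ℝ) := (Real.rpow_one 2).symm
        _ ≤ 2 ^ (c * (c + 1)) := Real.rpow_le_rpow_of_exponent_le (by norm_num) (by nlinarith)
    · have hfl := Nat.floor_le (a := 7 / ε) (by positivity)
      have hfl2 := Nat.lt_floor_add_one (7 / ε)
      have ha2 : ((⌊7 / ε⌋₊ + 1 : ℕ) : ℝ) ≤ 7 / ε + 1 := by push_cast; linarith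
      have hb := real_bound hε hr G w hminor hL (a := ⌊7 / ε⌋₊ + 1) (by push_cast; exact hfl2) ha2
      refine le_trans ?_ (arith hε h3 ha2 hc')
      exact_mod_cast hb.le

end ScatterDim
end

section
/- For all integers t,r ≥ 1 and every real ε with 0 < ε < 1/(r+2), there exists an edge-weighted graph of treewidth at most 2t+2 whose shortest-path metric has ε-scatter dimension at least 2^C(t+r,t), where C(·,·) denotes the binomial coefficient. -/
open scoped ENNReal

namespace ScatterDim

variable {V : Type}





/-! ### level values -/

open Classical in
theorem exists_val (t r : ℕ) : ∃ val : ℕ → ℕ,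
    (∀ k, k + 1 < (t + r).choose t → ∃ m, k < m ∧ m < (t + r).choose t ∧ val m = val k + 1 ∧
      ∀ j, k < j → j < m → val j ≤ val k) ∧
    (∀ n, n < (t + r).choose t →
      ((Finset.range n).filter (fun k => ∀ j, k < j → j < n → val j ≤ val k)).card ≤ t) ∧
    (∀ k, k + 1 = (t + r).choose t → val k = r) ∧
    (∀ k, k + 1 < (t + r).choose t → val k < r) := by
  induction t generalizing r with
  | zero =>
    refine ⟨fun _ => r, ?_, ?_, ?_, ?_⟩
    · intro k hk; simp at hk
    · intro n hn; simp at hn; subst hn; simp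
    · simp
    · intro k hk; simp at hk
  | succ t iht =>
    induction r with
    | zero =>
      refine ⟨fun _ => 0, ?_, ?_, ?_, ?_⟩
      · intro k hk; simp at hk
      · intro n hn; simp at hn; subst hn; simp
      · simp
      · intro k hk; simp at hk
    | succ r ihr =>
      obtain ⟨v1, a1, b1, c1, d1⟩ := ihr
      obtain ⟨v2, a2, b2, c2, d2⟩ := iht (r + 1)
      have hN : (t + 1 + (r + 1)).choose (t + 1) =
          (t + 1 + r).choose (t + 1) + (t + (r + 1)).choose t := by
        rw [show t + 1 + (r + 1) = (t + 1 + r) + 1 by ring, Nat.choose_succ_succ,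
          show t + (r + 1) = t + 1 + r by ring, add_comm]
      have p1 : 0 < (t + 1 + r).choose (t + 1) := Nat.choose_pos (by omega)
      have p2 : 0 < (t + (r + 1)).choose t := Nat.choose_pos (by omega)
      rw [hN]
      generalize (t + 1 + r).choose (t + 1) = N1 at *
      generalize (t + (r + 1)).choose t = N2 at *
      refine ⟨fun n => if n < N1 then v1 n else v2 (n - N1), ?_, ?_, ?_, ?_⟩
      · intro k hk
        rcases lt_trichotomy (k + 1) N1 with h | h | h
        · obtain ⟨m, h1, h2, h3, h4⟩ := a1 k h
          refine ⟨m, h1, by omega, ?_, ?_⟩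
          · simp only [h2, if_true, show k < N1 by omega, h3]
          · intro j hj hj'
            simp only [show j < N1 by omega, if_true, show k < N1 by omega]
            exact h4 j hj hj'
        · refine ⟨N1 + N2 - 1, by omega, by omega, ?_, ?_⟩
          · simp only [show ¬ (N1 + N2 - 1 < N1) by omega, if_false, show k < N1 by omega, if_true]
            rw [c1 k h, c2 _ (by omega)]
          · intro j hj hj'
            simp only [show ¬ (j < N1) by omega, if_false, show k < N1 by omega, if_true]
            rw [c1 k h]
            have := d2 (j - N1) (by omega)
            omega
        · obtain ⟨m, h1, h2, h3, h4⟩ := a2 (k - N1) (by omega)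
          refine ⟨m + N1, by omega, by omega, ?_, ?_⟩
          · simp only [show ¬ (m + N1 < N1) by omega, if_false, show ¬ (k < N1) by omega]
            rw [Nat.add_sub_cancel, h3]
          · intro j hj hj'
            simp only [show ¬ (j < N1) by omega, if_false, show ¬ (k < N1) by omega]
            exact h4 _ (by omega) (by omega)
      · intro n hn
        by_cases h : n < N1
        · refine le_trans (Finset.card_le_card ?_) (b1 n h)
          intro k hk
          simp only [Finset.mem_filter, Finset.mem_range] at hk ⊢
          refine ⟨hk.1, fun j hj hj' => ?_⟩
          have := hk.2 j hj hj'
          simpa only [show j < N1 by omega, if_true, show k < N1 by omega] using this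
        · have hb := b2 (n - N1) (by omega)
          set S := (Finset.range (n - N1)).filter
            (fun k => ∀ j, k < j → j < n - N1 → v2 j ≤ v2 k) with hS
          have : (insert (N1 - 1) (S.image (· + N1))).card ≤ t + 1 :=
            le_trans (Finset.card_insert_le _ _)
              (Nat.succ_le_succ (le_trans Finset.card_image_le hb))
          refine le_trans (Finset.card_le_card ?_) this
          intro k hk
          simp only [Finset.mem_filter, Finset.mem_range] at hk
          simp only [Finset.mem_insert, Finset.mem_image]
          by_cases hk1 : k + 1 < N1
          · exfalso
            have := hk.2 (N1 - 1) (by omega) (by omega)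
            simp only [show N1 - 1 < N1 by omega, if_true, show k < N1 by omega] at this
            rw [c1 (N1 - 1) (by omega)] at this
            have := d1 k hk1
            omega
          · by_cases hk2 : k + 1 = N1
            · left; omega
            · right
              refine ⟨k - N1, ?_, by omega⟩
              simp only [hS, Finset.mem_filter, Finset.mem_range]
              refine ⟨by omega, fun j hj hj' => ?_⟩
              have := hk.2 (j + N1) (by omega) (by omega)
              simpa only [show ¬ (j + N1 < N1) by omega, if_false, show ¬ (k < N1) by omega,
                Nat.add_sub_cancel] using this
      · intro k hk
        simp only [show ¬ (k < N1) by omega, if_false]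
        exact c2 _ (by omega)
      · intro k hk
        by_cases h : k < N1
        · simp only [h, if_true]
          by_cases h' : k + 1 < N1
          · have := d1 k h'; omega
          · have := c1 k (by omega); omega
        · simp only [h, if_false]
          exact d2 _ (by omega)

/-! ### binary strings -/

def bits : ℕ → ℕ → List Bool
  | 0, _ => []
  | n + 1, i => (decide (i % 2 = 1)) :: bits n (i / 2)

theorem bits_length (n i : ℕ) : (bits n i).length = n := by
  induction n generalizing i with
  | zero => rfl
  | succ n ih => simp [bits, ih]

theorem bits_lt (n i j : ℕ) (hi : i < 2 ^ n) (hji : j < i) :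
    ∃ s, (false :: s) <:+ bits n j ∧ (true :: s) <:+ bits n i := by
  induction n generalizing i j with
  | zero => simp at hi; omega
  | succ n ih =>
    rw [pow_succ] at hi
    by_cases h : j / 2 < i / 2
    · obtain ⟨s, h1, h2⟩ := ih (i / 2) (j / 2) (by omega) h
      exact ⟨s, h1.trans (List.suffix_cons _ _), h2.trans (List.suffix_cons _ _)⟩
    · have h1 : j / 2 = i / 2 := by omega
      have h2 : j % 2 = 0 := by omega
      have h3 : i % 2 = 1 := by omega
      refine ⟨bits n (i / 2), ?_, ?_⟩
      · simp [bits, h1, h2]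
      · simp [bits, h3]

/-! ### rooted trees -/

def parGraph {ι : Type} (par : ι → ι) : SimpleGraph ι :=
  SimpleGraph.fromRel (fun u v => par u = v)

theorem parGraph_connected {ι : Type} (par : ι → ι) (rank : ι → ℕ) (S : Set ι) (top : ι)
    (htop : top ∈ S) (h : ∀ x ∈ S, x ≠ top → par x ∈ S ∧ rank (par x) < rank x) :
    ((parGraph par).induce S).Connected := by
  have key : ∀ n : ℕ, ∀ x : S, rank x.1 = n →
      ((parGraph par).induce S).Reachable x ⟨top, htop⟩ := by
    intro n
    induction n using Nat.strong_induction_on with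
    | _ n ih =>
      intro x hx
      by_cases hxt : x.1 = top
      · have : x = ⟨top, htop⟩ := Subtype.ext hxt
        rw [this]
      · obtain ⟨h1, h2⟩ := h x.1 x.2 hxt
        have := ih _ (hx ▸ h2) ⟨par x.1, h1⟩ rfl
        refine SimpleGraph.Reachable.trans (SimpleGraph.Adj.reachable ?_) this
        simp only [SimpleGraph.comap_adj, parGraph, SimpleGraph.fromRel_adj]
        refine ⟨?_, Or.inl rfl⟩
        intro heq
        simp only [Function.Embedding.subtype_apply] at heq
        rw [← heq] at h2
        exact lt_irrefl _ h2
  have : Nonempty S := ⟨⟨top, htop⟩⟩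
  exact ⟨fun x y => (key _ x rfl).trans (key _ y rfl).symm⟩

theorem parGraph_isTree {ι : Type} (par : ι → ι) (rank : ι → ℕ) (root : ι)
    (hroot : par root = root) (h : ∀ x, x ≠ root → rank (par x) < rank x) :
    (parGraph par).IsTree := by
  have hle : ∀ x, rank (par x) ≤ rank x := by
    intro x
    by_cases hx : x = root
    · rw [hx, hroot]
    · exact (h x hx).le
  refine ⟨?_, ?_⟩
  · have h1 := parGraph_connected par rank Set.univ root trivial
      (fun x _ hx => ⟨trivial, h x hx⟩)
    exact (SimpleGraph.induceUnivIso (parGraph par)).connected_iff.1 h1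
  · have main : ∀ u, u ≠ par u →
        ¬ ((parGraph par) \ SimpleGraph.fromEdgeSet {s(u, par u)}).Reachable u (par u) := by
      intro u hu hreach
      have hur : u ≠ root := by rintro rfl; exact hu hroot.symm
      have inv : ∀ a b, ((parGraph par) \ SimpleGraph.fromEdgeSet {s(u, par u)}).Walk a b →
          (∃ n, par^[n] a = u) → ∃ n, par^[n] b = u := by
        intro a b p
        induction p with
        | nil => exact id
        | @cons a c b hadj p ih =>
          rintro ⟨n, hn⟩
          apply ih
          simp only [SimpleGraph.sdiff_adj, parGraph, SimpleGraph.fromRel_adj,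
            SimpleGraph.fromEdgeSet_adj, Set.mem_singleton_iff] at hadj
          obtain ⟨⟨hne, hor⟩, hnot⟩ := hadj
          rcases hor with hac | hca
          · cases n with
            | zero =>
              exfalso
              simp only [Function.iterate_zero, id] at hn
              subst hn
              subst hac
              exact hnot ⟨rfl, hne⟩
            | succ n =>
              refine ⟨n, ?_⟩
              rw [Function.iterate_succ_apply, hac] at hn
              exact hn
          · exact ⟨n + 1, by rw [Function.iterate_succ_apply, hca]; exact hn⟩
      obtain ⟨p⟩ := hreach
      obtain ⟨n, hn⟩ := inv _ _ p ⟨0, rfl⟩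
      have : ∀ n x, rank (par^[n] x) ≤ rank x := by
        intro n
        induction n with
        | zero => intro x; exact le_rfl
        | succ n ih => intro x; rw [Function.iterate_succ_apply]; exact (ih _).trans (hle x)
      have h1 := this n (par u)
      rw [hn] at h1
      have := h u hur
      omega
    rw [SimpleGraph.isAcyclic_iff_forall_adj_isBridge]
    intro u v huv
    have huv' := huv
    simp only [parGraph, SimpleGraph.fromRel_adj] at huv'
    rw [SimpleGraph.isBridge_iff]
    obtain ⟨hne, rfl | rfl⟩ := huv'
    · exact main u hne
    · intro hr
      rw [Sym2.eq_swap] at hr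
      exact main v hne.symm hr.symm

/-! ### the graph -/

abbrev Vx (N : ℕ) : Type := {l : List Bool // l.length < N} × Bool × Bool

def str {N : ℕ} (v : Vx N) : List Bool := v.2.1 :: v.1.1

def Up (val : ℕ → ℕ) {N : ℕ} (u v : Vx N) : Prop :=
  u.2.2 = v.2.2 ∧ str u <:+ v.1.1 ∧ val v.1.1.length = val u.1.1.length + 1 ∧
    ∀ j, u.1.1.length < j → j < v.1.1.length → val j ≤ val u.1.1.length

def Cr {N : ℕ} (u v : Vx N) : Prop :=
  u.1.1 = v.1.1 ∧ u.2.1 = false ∧ u.2.2 = false ∧ v.2.1 = true ∧ v.2.2 = true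

def gr (val : ℕ → ℕ) (N : ℕ) : SimpleGraph (Vx N) :=
  SimpleGraph.fromRel (fun u v => Up val u v ∨ Cr u v)

noncomputable def psi (val : ℕ → ℕ) {N : ℕ} (v : Vx N) : ℝ :=
  if v.2.2 = true then ((val v.1.1.length : ℝ) + 2) else -((val v.1.1.length : ℝ) + 2)

noncomputable def wt (val : ℕ → ℕ) (N : ℕ) : Sym2 (Vx N) → ℝ≥0∞ :=
  Sym2.lift ⟨fun u v => ENNReal.ofReal |psi val u - psi val v|, by
    intro u v; simp only [abs_sub_comm]⟩

theorem walk_lower {V : Type} {G : SimpleGraph V} {w : Sym2 V → ℝ≥0∞} (f : V → ℝ)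
    (hf : ∀ u v, G.Adj u v → ENNReal.ofReal (f v - f u) ≤ w s(u, v)) {u v : V}
    (p : G.Walk u v) : ENNReal.ofReal (f v - f u) ≤ walkWeight w p := by
  induction p with
  | nil => simp
  | @cons a b c hadj p ih =>
    have h1 := hf _ _ hadj
    have : walkWeight w (SimpleGraph.Walk.cons hadj p) = w s(a, b) + walkWeight w p := by
      simp [walkWeight]
    rw [this]
    calc ENNReal.ofReal (f c - f a) = ENNReal.ofReal ((f b - f a) + (f c - f b)) := by
          congr 1; ring
      _ ≤ _ := ENNReal.ofReal_add_le
      _ ≤ _ := add_le_add h1 ih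

theorem gdist_le_adj {V : Type} {G : SimpleGraph V} {w : Sym2 V → ℝ≥0∞} {u v : V}
    (h : G.Adj u v) : gdist G w u v ≤ w s(u, v) := by
  refine le_trans (iInf_le _ (SimpleGraph.Walk.cons h SimpleGraph.Walk.nil)) ?_
  simp [walkWeight]

theorem gdist_triangle {V : Type} (G : SimpleGraph V) (w : Sym2 V → ℝ≥0∞) (a b c : V) :
    gdist G w a c ≤ gdist G w a b + gdist G w b c := by
  unfold gdist
  refine ENNReal.le_iInf_add_iInf ?_
  intro p q
  refine le_trans (iInf_le _ (p.append q)) ?_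
  simp [walkWeight, SimpleGraph.Walk.edges_append]

theorem gdist_comm {V : Type} (G : SimpleGraph V) (w : Sym2 V → ℝ≥0∞) (a b : V) :
    gdist G w a b = gdist G w b a := by
  have : ∀ a b, gdist G w a b ≤ gdist G w b a := by
    intro a b
    refine le_iInf fun p => le_trans (iInf_le _ p.reverse) ?_
    simp [walkWeight, SimpleGraph.Walk.edges_reverse, List.sum_reverse]
  exact le_antisymm (this a b) (this b a)

theorem Up.adj {val : ℕ → ℕ} {N : ℕ} {u v : Vx N} (h : Up val u v) : (gr val N).Adj u v := by
  refine ⟨?_, Or.inl (Or.inl h)⟩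
  rintro rfl
  have := h.2.2.1
  omega

theorem Cr.adj {val : ℕ → ℕ} {N : ℕ} {u v : Vx N} (h : Cr u v) : (gr val N).Adj u v := by
  refine ⟨?_, Or.inl (Or.inr h)⟩
  rintro rfl
  have h1 := h.2.1
  have h2 := h.2.2.2.1
  simp_all

theorem lower {val : ℕ → ℕ} {N : ℕ} (u v : Vx N) (hs : u.1 = v.1) (hb : u.2.1 = v.2.1)
    (hu : u.2.2 = false) (hv : v.2.2 = true) :
    ENNReal.ofReal (2 * val u.1.1.length + 6) ≤ gdist (gr val N) (wt val N) u v := by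
  classical
  set f : Vx N → ℝ := fun a => psi val a +
    (if (a.2.2 = false ∧ str a <:+ str u) ∨ (a.2.2 = true ∧ ¬ str a <:+ str u) then 0 else 2)
    with hf
  have hE : ∀ a b, (Up val a b ∨ Cr a b) → |f b - f a| ≤ |psi val b - psi val a| := by
    rintro a b (h | h)
    · obtain ⟨h1, h2, h3, h4⟩ := h
      have h2' : str a <:+ str b := h2.trans (List.suffix_cons _ _)
      have h5 : str b <:+ str u → str a <:+ str u := fun h => h2'.trans h
      have h3' : (val b.1.1.length : ℝ) = val a.1.1.length + 1 := by exact_mod_cast h3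
      simp only [hf, psi, ← h1, h3']
      by_cases hd : a.2.2 = true
      · simp only [hd]
        by_cases ha : str a <:+ str u <;> by_cases hb : str b <:+ str u <;>
          simp_all <;> norm_num [abs_le]
      · simp only [Bool.not_eq_true] at hd
        simp only [hd]
        by_cases ha : str a <:+ str u <;> by_cases hb : str b <:+ str u <;>
          simp_all <;> norm_num [abs_le]
    · obtain ⟨h1, h2, h3, h4, h5⟩ := h
      have h6 : str a <:+ str u → ¬ str b <:+ str u := by
        intro ha hb
        have := List.suffix_of_suffix_length_le ha hb (by simp [str, h1])
        have := this.eq_of_length (by simp [str, h1])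
        simp [str, h2, h4] at this
      simp only [hf, psi, h3, h5, h1]
      have h0 : (0 : ℝ) ≤ val b.1.1.length := Nat.cast_nonneg _
      simp only [if_true, Bool.false_eq_true, if_false, false_and, true_and, or_false, false_or,
        reduceCtorEq]
      rw [abs_le]
      have h7 : |((val b.1.1.length : ℝ) + 2) - -((val b.1.1.length : ℝ) + 2)| =
        2 * (val b.1.1.length : ℝ) + 4 := by
        rw [abs_of_nonneg] <;> linarith
      rw [h7]
      by_cases ha : str a <:+ str u <;> by_cases hb : str b <:+ str u <;>
          simp_all <;> constructor <;> linarith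
  have hlip : ∀ a b, (gr val N).Adj a b → ENNReal.ofReal (f b - f a) ≤ wt val N s(a, b) := by
    intro a b hab
    simp only [wt, Sym2.lift_mk]
    apply ENNReal.ofReal_le_ofReal
    refine (le_abs_self _).trans ?_
    rcases hab.2 with h | h
    · rw [abs_sub_comm (psi val a)]; exact hE a b h
    · rw [abs_sub_comm]; exact hE b a h
  refine le_iInf fun p => ?_
  refine le_trans (le_of_eq ?_) (walk_lower f hlip p)
  have hstr : str v = str u := by simp [str, hs, hb]
  simp only [hf, psi, hu, hv, hstr]
  simp [hs]
  ring_nf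

theorem climb {val : ℕ → ℕ} {N R : ℕ}
    (ha : ∀ k, k + 1 < N → ∃ m, k < m ∧ m < N ∧ val m = val k + 1 ∧
      ∀ j, k < j → j < m → val j ≤ val k)
    (hc : ∀ k, k + 1 = N → val k = R) (x : Vx N) (hx : x.1.1.length + 1 = N) :
    ∀ n, ∀ u : Vx N, N - u.1.1.length = n → u.2.2 = x.2.2 → str u <:+ str x →
      val u.1.1.length ≤ R ∧
      gdist (gr val N) (wt val N) u x ≤ ENNReal.ofReal (R - val u.1.1.length) := by
  intro n
  induction n using Nat.strong_induction_on with
  | _ n ih =>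
    intro u hn hd hs
    by_cases hu : u.1.1.length + 1 = N
    · have h1 : str u = str x := hs.eq_of_length (by simp [str]; omega)
      have h2 : u = x := by
        obtain ⟨⟨s, _⟩, b, d⟩ := u
        obtain ⟨⟨s', _⟩, b', d'⟩ := x
        simp [str] at h1 hd
        simp [h1, hd]
      rw [h2]
      refine ⟨(hc _ hx).le, ?_⟩
      refine le_trans (iInf_le _ SimpleGraph.Walk.nil) ?_
      simp [walkWeight]
    · have hlt := u.1.2
      obtain ⟨m, h1, h2, h3, h4⟩ := ha u.1.1.length (by omega)
      -- ancestor at level m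
      obtain ⟨l, hl, hlen⟩ : ∃ l, l <:+ str x ∧ l.length = m + 1 := by
        refine ⟨(str x).drop (N - (m + 1)), List.drop_suffix _ _, ?_⟩
        simp [str]; omega
      obtain ⟨b, s, rfl⟩ : ∃ b s, l = b :: s := by
        cases l with
        | nil => simp at hlen
        | cons b s => exact ⟨b, s, rfl⟩
      have hslen : s.length = m := by simpa using hlen
      let v : Vx N := (⟨s, by omega⟩, b, x.2.2)
      have hUp : Up val u v := by
        refine ⟨hd, ?_, ?_, ?_⟩
        · refine List.suffix_of_suffix_length_le hs ((List.suffix_cons b s).trans hl) ?_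
          change (str u).length ≤ s.length
          simp only [str, List.length_cons]; omega
        · simp only [v, hslen, h3]
        · simpa only [v, hslen] using h4
      obtain ⟨h5, h6⟩ := ih (N - v.1.1.length) (by rw [show v.1.1.length = m from hslen]; omega) v rfl rfl hl
      have h7 : val v.1.1.length = val u.1.1.length + 1 := hUp.2.2.1
      refine ⟨by omega, ?_⟩
      refine le_trans (gdist_triangle _ _ u v x) ?_
      refine le_trans (add_le_add (gdist_le_adj hUp.adj) h6) ?_
      have h8 : wt val N s(u, v) = ENNReal.ofReal 1 := by
        simp only [wt, Sym2.lift_mk, psi, hUp.1, h7]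
        congr 1
        by_cases hd : v.2.2 = true
        · simp only [hd]; norm_num [abs_eq]
        · simp only [hd]; norm_num [abs_eq]
      have h9 : (val v.1.1.length : ℝ) ≤ R := by exact_mod_cast h5
      rw [h8, ← ENNReal.ofReal_add (by norm_num) (by linarith)]
      apply ENNReal.ofReal_le_ofReal
      rw [h7]; push_cast; linarith

theorem upper {val : ℕ → ℕ} {N R : ℕ}
    (ha : ∀ k, k + 1 < N → ∃ m, k < m ∧ m < N ∧ val m = val k + 1 ∧
      ∀ j, k < j → j < m → val j ≤ val k)
    (hc : ∀ k, k + 1 = N → val k = R) (p x : Vx N)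
    (hp : p.1.1.length + 1 = N) (hx : x.1.1.length + 1 = N)
    (hpd : p.2.2 = false) (hxd : x.2.2 = true) (s : List Bool)
    (h1 : (false :: s) <:+ str p) (h2 : (true :: s) <:+ str x) :
    gdist (gr val N) (wt val N) p x ≤ ENNReal.ofReal (2 * R + 4) := by
  have hs : s.length < N := by
    have := h1.length_le
    simp [str] at this; omega
  let u : Vx N := (⟨s, hs⟩, false, false)
  let v : Vx N := (⟨s, hs⟩, true, true)
  obtain ⟨hle, hu⟩ := climb ha hc p hp _ u rfl hpd.symm h1
  obtain ⟨_, hv⟩ := climb ha hc x hx _ v rfl hxd.symm h2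
  have huv : Cr u v := ⟨rfl, rfl, rfl, rfl, rfl⟩
  have hle' : (val s.length : ℝ) ≤ R := by exact_mod_cast hle
  have h0 : (0 : ℝ) ≤ val s.length := Nat.cast_nonneg _
  rw [gdist_comm] at hu
  refine le_trans (gdist_triangle _ _ p u x) ?_
  refine le_trans (add_le_add hu (gdist_triangle _ _ u v x)) ?_
  refine le_trans (add_le_add le_rfl (add_le_add (gdist_le_adj huv.adj) hv)) ?_
  have h8 : wt val N s(u, v) = ENNReal.ofReal (2 * val s.length + 4) := by
    simp only [wt, Sym2.lift_mk, psi, u, v]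
    congr 1
    simp only [if_true, Bool.false_eq_true, if_false]
    rw [abs_of_nonpos] <;> linarith
  rw [h8]
  simp only [u, v]
  rw [← ENNReal.ofReal_add (by linarith) (by linarith),
    ← ENNReal.ofReal_add (by linarith) (by linarith)]
  apply ENNReal.ofReal_le_ofReal
  linarith

/-! ### the tree decomposition -/

def par : List Bool × Bool → List Bool × Bool
  | (s, true) => (s, false)
  | ([], false) => ([], false)
  | (b :: s, false) => (s, b)

def rk (x : List Bool × Bool) : ℕ := 2 * x.1.length + (if x.2 = true then 1 else 0)

theorem rk_par (x : List Bool × Bool) (hx : x ≠ ([], false)) : rk (par x) < rk x := by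
  obtain ⟨s, c⟩ := x
  cases c with
  | true => simp [par, rk]
  | false =>
    cases s with
    | nil => exact absurd rfl hx
    | cons b s => cases b <;> simp [par, rk] <;> omega

def Apx (val : ℕ → ℕ) {N : ℕ} (v : Vx N) (s : List Bool) : Prop :=
  s.length < N ∧ str v <:+ s ∧ ∀ j, v.1.1.length < j → j < s.length → val j ≤ val v.1.1.length

def bg (val : ℕ → ℕ) (N : ℕ) (x : List Bool × Bool) : Set (Vx N) :=
  {v | (v.1.1 = x.1 ∧ (v.2.1 = v.2.2 ∨ v.2.1 = x.2)) ∨ Apx val v x.1}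

open Classical in
theorem bg_card {val : ℕ → ℕ} {N t : ℕ}
    (hb : ∀ n, n < N →
      ((Finset.range n).filter (fun k => ∀ j, k < j → j < n → val j ≤ val k)).card ≤ t)
    (x : List Bool × Bool) : (bg val N x).ncard ≤ 2 * t + 3 := by
  obtain ⟨s, c⟩ := x
  have hfin : Finite (Vx N) := by
    have : Finite {l : List Bool // l.length < N} := List.finite_length_lt Bool N
    infer_instance
  by_cases hs : s.length < N
  · let A : Set (Vx N) := {(⟨s, hs⟩, false, false), (⟨s, hs⟩, true, true), (⟨s, hs⟩, c, !c)}
    let B : Set (Vx N) := {v | Apx val v s}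
    have hsub : bg val N (s, c) ⊆ A ∪ B := by
      rintro ⟨⟨s', h'⟩, b, d⟩ (⟨h1, h2⟩ | h)
      · left
        simp only at h1 h2
        subst h1
        simp only [A, Set.mem_insert_iff, Set.mem_singleton_iff, Prod.mk.injEq, true_and]
        revert h2
        cases b <;> cases d <;> cases c <;> simp
      · right; exact h
    have hA : A.ncard ≤ 3 := by
      refine (Set.ncard_insert_le _ _).trans ?_
      refine Nat.succ_le_succ ((Set.ncard_insert_le _ _).trans ?_)
      simp
    have hB : B.ncard ≤ 2 * t := by
      let K := (Finset.range s.length).filter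
        (fun k => ∀ j, k < j → j < s.length → val j ≤ val k)
      let F : Finset (ℕ × Bool) := K ×ˢ Finset.univ
      have hF : F.card ≤ 2 * t := by
        simp only [F, Finset.card_product, Finset.card_univ, Fintype.card_bool]
        have := hb _ hs
        have : K.card ≤ t := this
        omega
      refine le_trans ?_ hF
      rw [← Set.ncard_coe_finset]
      refine Set.ncard_le_ncard_of_injOn (fun v => (v.1.1.length, v.2.2)) ?_ ?_ (Finset.finite_toSet _)
      · rintro v ⟨_, h1, h2⟩
        simp only [F, K, Finset.coe_product, Set.mem_prod, Finset.mem_coe, Finset.mem_filter,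
          Finset.mem_range, Finset.mem_univ, and_true]
        refine ⟨?_, h2⟩
        have := h1.length_le
        simp only [str, List.length_cons] at this
        omega
      · rintro ⟨⟨s1, _⟩, b1, d1⟩ ⟨_, h1, _⟩ ⟨⟨s2, _⟩, b2, d2⟩ ⟨_, h2, _⟩ heq
        simp only [Prod.mk.injEq] at heq
        have h3 := List.suffix_of_suffix_length_le h1 h2 (by simp [str, heq.1])
        have h4 := h3.eq_of_length (by simp [str, heq.1])
        simp [str] at h4
        simp [h4, heq.2]
    have := (Set.ncard_le_ncard hsub (Set.toFinite _)).trans (Set.ncard_union_le A B)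
    omega
  · have : bg val N (s, c) = ∅ := by
      ext ⟨⟨s', h'⟩, b, d⟩
      simp only [bg, Apx, Set.mem_setOf_eq, Set.mem_empty_iff_false, iff_false]
      rintro (⟨h1, _⟩ | ⟨h1, _⟩)
      · exact hs (h1 ▸ h')
      · exact hs h1
    rw [this]; simp

theorem bg_decomp (val : ℕ → ℕ) (N : ℕ) :
    IsTreeDecompOf (gr val N) (parGraph par) (bg val N) := by
  refine ⟨parGraph_isTree par rk ([], false) rfl rk_par, ?_, ?_⟩
  · have hE : ∀ u v : Vx N, (Up val u v ∨ Cr u v) → ∃ t, u ∈ bg val N t ∧ v ∈ bg val N t := by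
      rintro u v (h | h)
      · exact ⟨(v.1.1, v.2.1), Or.inr ⟨v.1.2, h.2.1, h.2.2.2⟩, Or.inl ⟨rfl, Or.inr rfl⟩⟩
      · obtain ⟨h1, h2, h3, h4, h5⟩ := h
        exact ⟨(v.1.1, false), Or.inl ⟨h1, Or.inr h2⟩, Or.inl ⟨rfl, Or.inl (h4.trans h5.symm)⟩⟩
    intro u v huv
    rcases huv.2 with h | h
    · exact hE u v h
    · obtain ⟨t, h1, h2⟩ := hE v u h
      exact ⟨t, h2, h1⟩
  · rintro ⟨⟨s', hs'⟩, b, d⟩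
    refine parGraph_connected par rk _ (s', if b = d then false else b) ?_ ?_
    · left
      refine ⟨rfl, ?_⟩
      by_cases h : b = d <;> simp [h]
    · rintro ⟨s, c⟩ hx hne
      suffices hpar : par (s, c) ∈ {x | ((⟨s', hs'⟩, b, d) : Vx N) ∈ bg val N x} ∧
          (s, c) ≠ ([], false) from ⟨hpar.1, rk_par _ hpar.2⟩
      simp only [Set.mem_setOf_eq, bg, Apx, str] at hx ⊢
      rcases hx with ⟨rfl, h⟩ | ⟨h1, h2, h3⟩
      · cases b <;> cases c <;> cases d <;> simp_all [par]
      · cases c with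
        | true => exact ⟨Or.inr ⟨h1, h2, h3⟩, by simp⟩
        | false =>
          cases s with
          | nil => simp at h2
          | cons e s =>
            refine ⟨?_, by simp⟩
            simp only [par]
            rcases List.suffix_cons_iff.1 h2 with h | h
            · simp only [List.cons.injEq] at h
              left; exact ⟨h.2, Or.inr h.1⟩
            · right
              simp only [List.length_cons] at h1 h3
              exact ⟨by omega, h, fun j hj hj' => h3 j hj (by omega)⟩

theorem stmt_1 (t r : ℕ) (ht : 1 ≤ t) (hr : 1 ≤ r) (ε : ℝ)
    (hε0 : 0 < ε) (hε : ε < 1 / ((r : ℝ) + 2)) :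
    ∃ (V : Type) (_ : Fintype V) (G : SimpleGraph V) (w : Sym2 V → ℝ≥0∞),
      (∀ e, w e ≠ ⊤) ∧
      TreewidthAtMost G (2 * t + 2) ∧
      ∃ ρ : ℝ, 0 < ρ ∧
        ∃ x p : Fin (2 ^ ((t + r).choose t)) → V,
          IsLadder (gdist G w) ε ρ (2 ^ ((t + r).choose t)) x p := by
  obtain ⟨val, ha, hb, hc, -⟩ := exists_val t r
  have hpos : 0 < (t + r).choose t := Nat.choose_pos (by omega)
  generalize (t + r).choose t = N at *
  obtain ⟨M, rfl⟩ : ∃ M, N = M + 1 := ⟨N - 1, by omega⟩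
  have hfin : Finite (Vx (M + 1)) := by
    have : Finite {l : List Bool // l.length < M + 1} := List.finite_length_lt Bool (M + 1)
    infer_instance
  let vx : Bool → ℕ → Vx (M + 1) := fun d i =>
    (⟨bits M (i / 2), by rw [bits_length]; omega⟩, decide (i % 2 = 1), d)
  have hstr : ∀ d i, str (vx d i) = bits (M + 1) i := fun d i => rfl
  have hlen : ∀ d i, (vx d i).1.1.length = M := fun d i => bits_length _ _
  have hr0 : (0 : ℝ) ≤ r := Nat.cast_nonneg _
  refine ⟨Vx (M + 1), Fintype.ofFinite _, gr val (M + 1), wt val (M + 1), ?_, ?_, 2 * r + 4,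
    by linarith, fun i => vx true i, fun i => vx false i, ?_, ?_⟩
  · intro e
    induction e using Sym2.ind with
    | _ u v => simp [wt]
  · exact ⟨_, parGraph par, bg val (M + 1), bg_decomp val (M + 1), fun x => bg_card hb x⟩
  · intro i j hji
    obtain ⟨s, h1, h2⟩ := bits_lt (M + 1) i j i.2 hji
    exact upper ha hc (vx false j) (vx true i) (by rw [hlen]) (by rw [hlen]) rfl rfl s h1 h2
  · intro i
    refine lt_of_lt_of_le ?_ (lower (vx false i) (vx true i) rfl rfl rfl rfl)
    rw [hlen, hc M rfl]
    rw [ENNReal.ofReal_lt_ofReal_iff (by linarith)]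
    have : ε * (r + 2) < 1 := by
      rwa [lt_div_iff₀ (by linarith)] at hε
    nlinarith

end ScatterDim
end
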